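/- For every integer k ≥ 2 and every ε > 0 there exists L > 0 with the following property. Let X₁, …, X_k be independent finitely supported random variables taking values in G = 𝔽₂ⁿ. Then there exists a subspace V ⊆ G with H[𝐔_V] ≤ L (H[X₁] + … + H[X_k]) such that H[π_V(X₁) + … + π_V(X_k)] ≥ H[π_V(X₁)] + … + H[π_V(X_k)] − ε (H[X₁] + … + H[X_k]). -/

import Mathlib

open Real Pointwise

noncomputable section


abbrev Fvec (n : ℕ) : Type := Fin n → ZMod 2

/-- Shannon entropy (natural log) of a finitely supported distribution. -/
def ent {A : Type*} (p : A → ℝ) : ℝ := ∑ᶠ a, Real.negMulLog (p a)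

/-- `p` is a (finitely supported) probability distribution. -/
def IsDist {A : Type*} (p : A → ℝ) : Prop := (∀ a, 0 ≤ p a) ∧ ∑ᶠ a, p a = 1

/-- Pushforward of a distribution along a map: the distribution of `f(X)` for `X ∼ p`. -/
def push {A B : Type*} (f : A → B) (p : A → ℝ) : B → ℝ := fun b => ∑ᶠ a ∈ f ⁻¹' {b}, p a

/-- Joint distribution of a pair of independent random variables. -/
def prodDist {A B : Type*} (p : A → ℝ) (q : B → ℝ) : A × B → ℝ := fun z => p z.1 * q z.2

/-- Distribution of `X + Y` for independent `X ∼ p`, `Y ∼ q`. -/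
def conv {A : Type*} [AddGroup A] (p q : A → ℝ) : A → ℝ := fun z => ∑ᶠ x, p x * q (z - x)

/-- The distribution of `X` conditioned on `U = b`, where `r` is the joint distribution of `(X, U)`. -/
def fiber {A B : Type*} (r : A × B → ℝ) (b : B) : A → ℝ := fun a => r (a, b) / push Prod.snd r b

/-- Conditional entropy `H[X | U]` of a joint distribution `r` of `(X, U)`. -/
def condEnt {A B : Type*} (r : A × B → ℝ) : ℝ := ∑ᶠ b, push Prod.snd r b * ent (fiber r b)

/-- Doubling mass `s[X ; Y]` (of independent copies with distributions `p`, `q`). -/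
def sDouble {A : Type*} [AddGroup A] (p q : A → ℝ) : ℝ := ent p + ent q - ent (conv p q)

/-- Conditional doubling mass `s[X | U ; Y | W] = 𝔼_{u ∼ U, w ∼ W} s[X_u ; Y_w]`,
where `r1`, `r2` are the joint distributions of `(X, U)` and `(Y, W)`. -/
def sCond {A U W : Type*} [AddGroup A] (r1 : A × U → ℝ) (r2 : A × W → ℝ) : ℝ :=
  ∑ᶠ u, ∑ᶠ w, push Prod.snd r1 u * push Prod.snd r2 w * sDouble (fiber r1 u) (fiber r2 w)

/-- Conditional mutual information `I[A : B | S]` of a joint distribution of `(A, B, S)`. -/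
def condMI {A B S : Type*} (r : A × B × S → ℝ) : ℝ :=
  ent (push (fun z => (z.1, z.2.2)) r) + ent (push (fun z => z.2) r)
    - ent r - ent (push (fun z => z.2.2) r)

/-- Uniform distribution on a set. -/
def unifOn {A : Type*} (s : Set A) : A → ℝ := s.indicator fun _ => (Nat.card s : ℝ)⁻¹

/-- Entropic Ruzsa distance `d[X ; Y]`. -/
def dRuzsa {A : Type*} [AddGroup A] (p q : A → ℝ) : ℝ := ent (conv p q) - ent p / 2 - ent q / 2

/-- Joint distribution of `(X, X + Y)` for independent `X ∼ p`, `Y ∼ q`. -/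
def jointSum {A : Type*} [AddGroup A] (p q : A → ℝ) : A × A → ℝ :=
  push (fun z : A × A => (z.1, z.1 + z.2)) (prodDist p q)

/-- Joint distribution of `(X, π_V(X))`. -/
def selfProj {n : ℕ} (V : Submodule (ZMod 2) (Fvec n)) (p : Fvec n → ℝ) :
    Fvec n × (Fvec n ⧸ V) → ℝ := push (fun x => (x, V.mkQ x)) p

/-- Joint distribution of independent `(X₁, X₂, Y₁, Y₂)` with `X₁, X₂ ∼ p` and `Y₁, Y₂ ∼ q`. -/
def quad {A : Type*} (p q : A → ℝ) : A × A × A × A → ℝ :=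
  fun z => p z.1 * p z.2.1 * q z.2.2.1 * q z.2.2.2

/-- Distribution of `X₁ + ⋯ + X_k` for independent `Xᵢ ∼ p i`. -/
def indepSum {A : Type*} [AddCommGroup A] (k : ℕ) (p : Fin k → A → ℝ) : A → ℝ :=
  push (fun x : Fin k → A => ∑ i, x i) (fun x => ∏ i, p i (x i))

/-- Statement `A(η, L, c)` from the paper. -/
def StA (η L c : ℝ) : Prop :=
  ∀ (n : ℕ) (p q : Fvec n → ℝ), IsDist p → IsDist q →
    ent (conv p q) ≤ (1 - η) * (ent p + ent q) →
    ∃ V : Submodule (ZMod 2) (Fvec n),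
      ent (unifOn (V : Set (Fvec n))) ≤ L * (ent p + ent q) ∧
      ent (push V.mkQ p) + ent (push V.mkQ q) ≤ (1 - c) * (ent p + ent q)

/-- Statement `B(η, ε, L)` from the paper. -/
def StB (η ε L : ℝ) : Prop :=
  ∀ (n : ℕ) (p q : Fvec n → ℝ), IsDist p → IsDist q →
    ∃ V : Submodule (ZMod 2) (Fvec n),
      ent (unifOn (V : Set (Fvec n))) ≤ L * (ent p + ent q) ∧
      ent (conv (push V.mkQ p) (push V.mkQ q)) ≥
        (1 - η) * (ent (push V.mkQ p) + ent (push V.mkQ q)) - ε * (ent p + ent q)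




/-! ## Entropy of random variables on finite probability spaces -/

/-- `P` is a probability weight on the finite type `Ω`. -/
def IsP {Ω : Type} [Fintype Ω] (P : Ω → ℝ) : Prop := (∀ ω, 0 ≤ P ω) ∧ ∑ ω, P ω = 1

open Classical in
/-- probability that `X` takes the value `X ω`. -/
def pr {Ω : Type} [Fintype Ω] {A : Type*} (P : Ω → ℝ) (X : Ω → A) (ω : Ω) : ℝ :=
  ∑ ω', if X ω' = X ω then P ω' else 0

/-- Shannon entropy of `X`. -/
def HH {Ω : Type} [Fintype Ω] {A : Type*} (P : Ω → ℝ) (X : Ω → A) : ℝ :=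
  ∑ ω, P ω * (-Real.log (pr P X ω))

/-- product weight -/
def pm {Ω Ω' : Type} (μ : Ω → ℝ) (ν : Ω' → ℝ) : Ω × Ω' → ℝ := fun z => μ z.1 * ν z.2

open Classical in
/-- conditional weight on the fibre of `Z` through `ω`. -/
def cd {Ω : Type} [Fintype Ω] {A : Type*} (P : Ω → ℝ) (Z : Ω → A) (ω : Ω) : Ω → ℝ :=
  fun ω' => if Z ω' = Z ω then P ω' / pr P Z ω else 0

/-- conditional entropy -/
def HC {Ω : Type} [Fintype Ω] {A B : Type*} (P : Ω → ℝ) (X : Ω → A) (Z : Ω → B) : ℝ :=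
  HH P (fun ω => (X ω, Z ω)) - HH P Z

section basic
variable {Ω Ω' Ω'' : Type} [Fintype Ω] [Fintype Ω'] [Fintype Ω''] {A B C D : Type*}

lemma pr_congr {P : Ω → ℝ} {X : Ω → A} {ω ω' : Ω} (h : X ω = X ω') : pr P X ω = pr P X ω' := by
  unfold pr; rw [h]

lemma le_pr {P : Ω → ℝ} (hP : IsP P) (X : Ω → A) (ω : Ω) : P ω ≤ pr P X ω := by
  classical
  unfold pr
  have := Finset.single_le_sum (f := fun ω' => if X ω' = X ω then P ω' else 0) (s := Finset.univ)
    (fun i _ => by split_ifs; exacts [hP.1 i, le_rfl]) (Finset.mem_univ ω)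
  simpa using this

lemma pr_nonneg {P : Ω → ℝ} (hP : IsP P) (X : Ω → A) (ω : Ω) : 0 ≤ pr P X ω :=
  (hP.1 ω).trans (le_pr hP X ω)

lemma pr_le_one {P : Ω → ℝ} (hP : IsP P) (X : Ω → A) (ω : Ω) : pr P X ω ≤ 1 := by
  classical
  rw [← hP.2]
  exact Finset.sum_le_sum fun i _ => by split_ifs; exacts [le_rfl, hP.1 i]

lemma pr_mono {P : Ω → ℝ} (hP : IsP P) {X : Ω → A} {Y : Ω → B} {ω : Ω} (hω : 0 < P ω)
    (h : ∀ ω ω', 0 < P ω → 0 < P ω' → Y ω = Y ω' → X ω = X ω') : pr P Y ω ≤ pr P X ω := by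
  classical
  refine Finset.sum_le_sum fun i _ => ?_
  rcases (hP.1 i).eq_or_lt with h0 | h0
  · simp [← h0]
  · by_cases hy : Y i = Y ω
    · simp [hy, h i ω h0 hω hy]
    · rw [if_neg hy]; split_ifs; exacts [h0.le, le_rfl]

lemma HH_nonneg {P : Ω → ℝ} (hP : IsP P) (X : Ω → A) : 0 ≤ HH P X := by
  refine Finset.sum_nonneg fun i _ => mul_nonneg (hP.1 i) ?_
  have := Real.log_nonpos (pr_nonneg hP X i) (pr_le_one hP X i)
  linarith

lemma HH_le {P : Ω → ℝ} (hP : IsP P) {X : Ω → A} {Y : Ω → B}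
    (h : ∀ ω ω', 0 < P ω → 0 < P ω' → Y ω = Y ω' → X ω = X ω') : HH P X ≤ HH P Y := by
  refine Finset.sum_le_sum fun i _ => ?_
  rcases (hP.1 i).eq_or_lt with h0 | h0
  · simp [← h0]
  · refine mul_le_mul_of_nonneg_left ?_ h0.le
    have := Real.log_le_log (h0.trans_le (le_pr hP Y i)) (pr_mono hP h0 h)
    linarith

lemma HH_congr {P : Ω → ℝ} {X : Ω → A} {Y : Ω → B}
    (h : ∀ ω ω', X ω = X ω' ↔ Y ω = Y ω') : HH P X = HH P Y := by
  classical
  have : ∀ ω, pr P X ω = pr P Y ω := fun ω => by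
    unfold pr
    refine Finset.sum_congr rfl fun ω' _ => ?_
    by_cases hx : X ω' = X ω
    · rw [if_pos hx, if_pos ((h _ _).1 hx)]
    · rw [if_neg hx, if_neg (fun hy => hx ((h _ _).2 hy))]
  unfold HH
  simp only [this]

lemma sum_pr_inv {P : Ω → ℝ} (hP : IsP P) (X : Ω → A) (f : Ω → ℝ) [DecidableEq A] :
    ∑ ω, P ω * ∑ ω', (if X ω' = X ω then P ω' / pr P X ω * f ω' else 0) = ∑ ω, P ω * f ω := by
  classical
  simp only [Finset.mul_sum]
  rw [Finset.sum_comm]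
  refine Finset.sum_congr rfl fun ω' _ => ?_
  rcases (hP.1 ω').eq_or_lt with h0 | h0
  · simp [← h0]
  have hp : 0 < pr P X ω' := h0.trans_le (le_pr hP X ω')
  have : ∀ ω, P ω * (if X ω' = X ω then P ω' / pr P X ω * f ω' else 0)
      = (if X ω = X ω' then P ω else 0) * (P ω' * f ω' / pr P X ω') := by
    intro ω
    by_cases h : X ω' = X ω
    · rw [if_pos h, if_pos h.symm, pr_congr h]; ring
    · rw [if_neg h, if_neg (fun h' => h h'.symm)]; ring
  simp only [this]
  rw [← Finset.sum_mul]
  have h2 : (∑ ω, if X ω = X ω' then P ω else 0) = pr P X ω' := by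
    unfold pr; refine Finset.sum_congr rfl fun _ _ => ?_; congr
  rw [h2]
  field_simp

lemma submod {P : Ω → ℝ} (hP : IsP P) {XA : Ω → A} {XB : Ω → B} {XC : Ω → C} {XD : Ω → D}
    (hA : ∀ ω ω', 0 < P ω → 0 < P ω' → XA ω = XA ω' → XD ω = XD ω')
    (hB : ∀ ω ω', 0 < P ω → 0 < P ω' → XB ω = XB ω' → XD ω = XD ω')
    (hC : ∀ ω ω', 0 < P ω → 0 < P ω' → XA ω = XA ω' → XB ω = XB ω' → XC ω = XC ω') :
    HH P XC + HH P XD ≤ HH P XA + HH P XB := by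
  classical
  set XAB : Ω → A × B := fun ω => (XA ω, XB ω) with hAB
  have h1 : HH P XC ≤ HH P XAB := HH_le hP fun ω ω' h h' e => by
    simp only [hAB, Prod.mk.injEq] at e; exact hC ω ω' h h' e.1 e.2
  suffices h : HH P XAB + HH P XD ≤ HH P XA + HH P XB by linarith
  have key : ∑ ω, P ω * (pr P XA ω * pr P XB ω / (pr P XAB ω * pr P XD ω)) ≤ 1 := by
    have e1 : ∀ ω, P ω * (pr P XA ω * pr P XB ω / (pr P XAB ω * pr P XD ω)) =
        ∑ ω1, ∑ ω2, (if XA ω1 = XA ω then P ω1 else 0) * (if XB ω2 = XB ω then P ω2 else 0) *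
          (P ω / (pr P XAB ω * pr P XD ω)) := by
      intro ω
      simp only [← Finset.sum_mul, ← Finset.mul_sum]
      unfold pr; ring
    simp only [e1]
    rw [Finset.sum_comm]
    have e2 : ∀ ω1, ∑ ω, ∑ ω2, (if XA ω1 = XA ω then P ω1 else 0) *
        (if XB ω2 = XB ω then P ω2 else 0) * (P ω / (pr P XAB ω * pr P XD ω)) ≤ P ω1 := by
      intro ω1
      rcases (hP.1 ω1).eq_or_lt with h0 | h0
      · simp [← h0]
      have hD : 0 < pr P XD ω1 := h0.trans_le (le_pr hP _ _)
      rw [Finset.sum_comm]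
      have : ∀ ω2, ∑ ω, (if XA ω1 = XA ω then P ω1 else 0) *
        (if XB ω2 = XB ω then P ω2 else 0) * (P ω / (pr P XAB ω * pr P XD ω)) ≤
          (P ω1 / pr P XD ω1) * (if XD ω2 = XD ω1 then P ω2 else 0) := by
        intro ω2
        by_cases hex : ∃ ω0, 0 < P ω0 ∧ 0 < P ω2 ∧ XA ω1 = XA ω0 ∧ XB ω2 = XB ω0
        · obtain ⟨ω0, p0, p2, a0, b0⟩ := hex
          have d1 := hA ω1 ω0 h0 p0 a0
          have d2 := hB ω2 ω0 p2 p0 b0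
          rw [if_pos (d2.trans d1.symm)]
          have hab : 0 < pr P XAB ω0 := p0.trans_le (le_pr hP _ _)
          have : ∀ ω, (if XA ω1 = XA ω then P ω1 else 0) *
            (if XB ω2 = XB ω then P ω2 else 0) * (P ω / (pr P XAB ω * pr P XD ω)) =
            (P ω1 * P ω2 / (pr P XAB ω0 * pr P XD ω1)) * (if XAB ω = XAB ω0 then P ω else 0) := by
            intro ω
            by_cases ha : XAB ω = XAB ω0
            · have ha' := ha
              simp only [hAB, Prod.mk.injEq] at ha'
              rw [if_pos ha, pr_congr ha, if_pos (a0.trans ha'.1.symm),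
                if_pos (b0.trans ha'.2.symm)]
              rcases (hP.1 ω).eq_or_lt with h00 | h00
              · simp [← h00]
              have : XD ω = XD ω1 := hA ω ω1 h00 h0 (ha'.1.trans a0.symm)
              rw [pr_congr this]; ring
            · rw [if_neg ha]
              have : ¬ (XA ω1 = XA ω ∧ XB ω2 = XB ω) := fun h => ha (by
                simp only [hAB, Prod.mk.injEq]
                exact ⟨h.1.symm.trans a0, h.2.symm.trans b0⟩)
              by_cases h' : XA ω1 = XA ω
              · rw [if_neg (fun h => this ⟨h', h⟩)]; ring
              · rw [if_neg h']; ring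
          simp only [this]
          rw [← Finset.mul_sum]
          have h2 : (∑ ω, if XAB ω = XAB ω0 then P ω else 0) = pr P XAB ω0 := by
            unfold pr; refine Finset.sum_congr rfl fun _ _ => ?_; congr
          rw [h2]
          apply le_of_eq
          field_simp
        · have : ∀ ω, (if XA ω1 = XA ω then P ω1 else 0) *
            (if XB ω2 = XB ω then P ω2 else 0) * (P ω / (pr P XAB ω * pr P XD ω)) = 0 := by
            intro ω
            by_contra hne
            apply hex
            refine ⟨ω, ?_, ?_, ?_, ?_⟩
            · rcases (hP.1 ω).eq_or_lt with h00 | h00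
              · exfalso; apply hne; simp [← h00]
              · exact h00
            · rcases (hP.1 ω2).eq_or_lt with h00 | h00
              · exfalso; apply hne; simp [← h00]
              · exact h00
            · by_contra h'; apply hne; simp [h']
            · by_contra h'; apply hne; simp [h']
          simp only [this, Finset.sum_const_zero]
          apply mul_nonneg (by positivity)
          split_ifs; exacts [hP.1 _, le_rfl]
      refine (Finset.sum_le_sum fun ω2 _ => this ω2).trans ?_
      rw [← Finset.mul_sum]
      have h2 : (∑ ω, if XD ω = XD ω1 then P ω else 0) = pr P XD ω1 := by
        unfold pr; refine Finset.sum_congr rfl fun _ _ => ?_; congr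
      rw [h2]
      apply le_of_eq; field_simp
    refine (Finset.sum_le_sum fun ω1 _ => e2 ω1).trans hP.2.le
  have hsum : HH P XAB + HH P XD - (HH P XA + HH P XB) ≤
      ∑ ω, P ω * (pr P XA ω * pr P XB ω / (pr P XAB ω * pr P XD ω)) - ∑ ω, P ω := by
    unfold HH
    simp only [← Finset.sum_add_distrib, ← Finset.sum_sub_distrib]
    refine Finset.sum_le_sum fun ω _ => ?_
    rcases (hP.1 ω).eq_or_lt with h00 | h00
    · simp [← h00]
    have a := h00.trans_le (le_pr hP XA ω)
    have b := h00.trans_le (le_pr hP XB ω)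
    have c := h00.trans_le (le_pr hP XAB ω)
    have d := h00.trans_le (le_pr hP XD ω)
    have := Real.log_le_sub_one_of_pos (x := pr P XA ω * pr P XB ω / (pr P XAB ω * pr P XD ω))
      (by positivity)
    rw [Real.log_div (by positivity) (by positivity), Real.log_mul a.ne' b.ne',
      Real.log_mul c.ne' d.ne'] at this
    nlinarith
  rw [hP.2] at hsum
  linarith

/-- measure preserving maps -/
def MP (e : Ω → Ω') (P : Ω → ℝ) (P' : Ω' → ℝ) : Prop :=
  ∀ f : Ω' → ℝ, ∑ ω, P ω * f (e ω) = ∑ ω, P' ω * f ω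

lemma HH_mp {e : Ω → Ω'} {P : Ω → ℝ} {P' : Ω' → ℝ} (h : MP e P P') (X : Ω' → A) :
    HH P (fun ω => X (e ω)) = HH P' X := by
  classical
  have h1 : ∀ ω, pr P (fun ω => X (e ω)) ω = pr P' X (e ω) := by
    intro ω
    have := h (fun ω' => if X ω' = X (e ω) then 1 else 0)
    simpa [pr] using this
  unfold HH
  simp only [h1]
  exact h (fun ω' => -Real.log (pr P' X ω'))

lemma MP.comp {e : Ω → Ω'} {e' : Ω' → Ω''} {P : Ω → ℝ} {P' : Ω' → ℝ} {P'' : Ω'' → ℝ}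
    (h' : MP e' P' P'') (h : MP e P P') : MP (fun ω => e' (e ω)) P P'' := fun f => by
  rw [← h' f, ← h]

lemma isP_pm {μ : Ω → ℝ} {ν : Ω' → ℝ} (h : IsP μ) (h' : IsP ν) : IsP (pm μ ν) := by
  refine ⟨fun z => mul_nonneg (h.1 _) (h'.1 _), ?_⟩
  simp only [pm, Fintype.sum_prod_type, ← Finset.mul_sum, h'.2, mul_one, h.2]

lemma MP_id (μ : Ω → ℝ) : MP (fun x => x) μ μ := fun _ => rfl

lemma MP_fst {μ : Ω → ℝ} {ν : Ω' → ℝ} (h' : IsP ν) : MP Prod.fst (pm μ ν) μ := fun f => by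
  simp only [pm, Fintype.sum_prod_type]
  refine Finset.sum_congr rfl fun x _ => ?_
  rw [← Finset.sum_mul, ← Finset.mul_sum, h'.2, mul_one]

lemma MP_swap (μ : Ω → ℝ) (ν : Ω' → ℝ) : MP Prod.swap (pm μ ν) (pm ν μ) := fun f => by
  simp only [pm, Fintype.sum_prod_type, Prod.swap]
  rw [Finset.sum_comm]
  refine Finset.sum_congr rfl fun x _ => Finset.sum_congr rfl fun y _ => ?_
  ring

lemma MP_snd {μ : Ω → ℝ} {ν : Ω' → ℝ} (h : IsP μ) : MP Prod.snd (pm μ ν) ν :=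
  (MP_fst h).comp (MP_swap μ ν)

lemma MP_assoc (μ : Ω → ℝ) (ν : Ω' → ℝ) (ρ : Ω'' → ℝ) :
    MP (fun z : (Ω × Ω') × Ω'' => (z.1.1, (z.1.2, z.2))) (pm (pm μ ν) ρ) (pm μ (pm ν ρ)) :=
  fun f => by
  simp only [pm, Fintype.sum_prod_type, mul_assoc]

lemma MP_assoc' (μ : Ω → ℝ) (ν : Ω' → ℝ) (ρ : Ω'' → ℝ) :
    MP (fun z : Ω × (Ω' × Ω'') => ((z.1, z.2.1), z.2.2)) (pm μ (pm ν ρ)) (pm (pm μ ν) ρ) :=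
  fun f => by
  simp only [pm, Fintype.sum_prod_type, mul_assoc]

lemma MP_prod {Ω₁ Ω₂ : Type} [Fintype Ω₁] [Fintype Ω₂] {μ : Ω → ℝ} {ν : Ω' → ℝ}
    {μ' : Ω₁ → ℝ} {ν' : Ω₂ → ℝ} {e : Ω → Ω₁} {e' : Ω' → Ω₂} (h : MP e μ μ') (h' : MP e' ν ν') :
    MP (fun z : Ω × Ω' => (e z.1, e' z.2)) (pm μ ν) (pm μ' ν') := fun f => by
  simp only [pm, Fintype.sum_prod_type, mul_assoc, ← Finset.mul_sum]
  have : ∀ x, ∑ y, ν y * f (e x, e' y) = ∑ y, ν' y * f (e x, y) := fun x =>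
    h' (fun y => f (e x, y))
  simp only [this]
  exact h (fun x => ∑ y, ν' y * f (x, y))

lemma pr_pm (μ : Ω → ℝ) (ν : Ω' → ℝ) (X : Ω → A) (Y : Ω' → B) (z : Ω × Ω') :
    pr (pm μ ν) (fun z => (X z.1, Y z.2)) z = pr μ X z.1 * pr ν Y z.2 := by
  classical
  unfold pr pm
  rw [Fintype.sum_prod_type, Finset.sum_mul_sum]
  refine Finset.sum_congr rfl fun x _ => Finset.sum_congr rfl fun y _ => ?_
  simp only [Prod.mk.injEq]
  by_cases h1 : X x = X z.1 <;> by_cases h2 : Y y = Y z.2 <;> simp [h1, h2]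

lemma HH_prod {μ : Ω → ℝ} {ν : Ω' → ℝ} (h : IsP μ) (h' : IsP ν) (X : Ω → A) (Y : Ω' → B) :
    HH (pm μ ν) (fun z => (X z.1, Y z.2)) = HH μ X + HH ν Y := by
  have h1 : HH μ X = HH (pm μ ν) (fun z => X z.1) := (HH_mp (MP_fst h') X).symm
  have h2 : HH ν Y = HH (pm μ ν) (fun z => Y z.2) := (HH_mp (MP_snd h) Y).symm
  have q1 : ∀ z, pr (pm μ ν) (fun z => X z.1) z = pr μ X z.1 := by
    intro z
    classical
    have := MP_fst (μ := μ) h' (fun ω' => if X ω' = X z.1 then 1 else 0)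
    simpa [pr] using this
  have q2 : ∀ z, pr (pm μ ν) (fun z => Y z.2) z = pr ν Y z.2 := by
    intro z
    classical
    have := MP_snd (ν := ν) h (fun ω' => if Y ω' = Y z.2 then 1 else 0)
    simpa [pr] using this
  rw [h1, h2]
  unfold HH
  rw [← Finset.sum_add_distrib]
  refine Finset.sum_congr rfl fun z _ => ?_
  rw [pr_pm, q1, q2]
  rcases ((isP_pm h h').1 z).eq_or_lt with h00 | h00
  · simp [← h00]
  have a := h00.trans_le (le_pr (isP_pm h h') (fun z => X z.1) z)
  have b := h00.trans_le (le_pr (isP_pm h h') (fun z => Y z.2) z)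
  rw [q1] at a; rw [q2] at b
  rw [Real.log_mul a.ne' b.ne']; ring

lemma HH_prod' {μ : Ω → ℝ} {ν : Ω' → ℝ} (h : IsP μ) (h' : IsP ν) (X : Ω → A) (Y : Ω' → B)
    (Z : Ω × Ω' → C) (hZ : ∀ z z', Z z = Z z' ↔ (X z.1 = X z'.1 ∧ Y z.2 = Y z'.2)) :
    HH (pm μ ν) Z = HH μ X + HH ν Y := by
  rw [← HH_prod h h']
  exact HH_congr fun z z' => by simp [hZ]

lemma isP_cd {P : Ω → ℝ} (hP : IsP P) (Z : Ω → A) {ω : Ω} (hω : 0 < P ω) : IsP (cd P Z ω) := by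
  classical
  have hp := hω.trans_le (le_pr hP Z ω)
  refine ⟨fun ω' => ?_, ?_⟩
  · unfold cd; split_ifs; exacts [div_nonneg (hP.1 _) hp.le, le_rfl]
  · have : ∀ ω', cd P Z ω ω' = (if Z ω' = Z ω then P ω' else 0) / pr P Z ω := by
      intro ω'; unfold cd; split_ifs <;> simp
    simp only [this, ← Finset.sum_div]
    have h2 : (∑ ω', if Z ω' = Z ω then P ω' else 0) = pr P Z ω := by
      unfold pr; refine Finset.sum_congr rfl fun _ _ => ?_; congr
    rw [h2, div_self hp.ne']

lemma HC_eq {P : Ω → ℝ} (hP : IsP P) (X : Ω → A) (Z : Ω → B) :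
    HC P X Z = ∑ ω, P ω * HH (cd P Z ω) X := by
  classical
  have h1 := sum_pr_inv hP Z (fun ω' => -Real.log (pr P (fun ω => (X ω, Z ω)) ω' / pr P Z ω'))
  have h2 : ∀ ω, HH (cd P Z ω) X = ∑ ω', (if Z ω' = Z ω then P ω' / pr P Z ω *
      (-Real.log (pr P (fun ω => (X ω, Z ω)) ω' / pr P Z ω')) else 0) := by
    intro ω
    unfold HH
    refine Finset.sum_congr rfl fun ω' _ => ?_
    by_cases h : Z ω' = Z ω
    · have : pr (cd P Z ω) X ω' = pr P (fun ω => (X ω, Z ω)) ω' / pr P Z ω' := by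
        unfold pr
        rw [Finset.sum_div]
        refine Finset.sum_congr rfl fun ω'' _ => ?_
        have e : (∑ ω_1, if Z ω_1 = Z ω' then P ω_1 else 0) = pr P Z ω := by
          rw [h]; unfold pr; refine Finset.sum_congr rfl fun _ _ => ?_; congr
        unfold cd
        simp only [Prod.mk.injEq, h]
        by_cases h3 : X ω'' = X ω' <;> by_cases h4 : Z ω'' = Z ω <;> simp [h3, h4]
        rfl
      rw [this, if_pos h, cd, if_pos h]
    · rw [if_neg h, cd, if_neg h, zero_mul]
  simp only [h2]
  rw [h1]
  unfold HC HH
  rw [← Finset.sum_sub_distrib]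
  refine Finset.sum_congr rfl fun ω _ => ?_
  rcases (hP.1 ω).eq_or_lt with h00 | h00
  · simp [← h00]
  rw [Real.log_div (h00.trans_le (le_pr hP _ ω)).ne' (h00.trans_le (le_pr hP _ ω)).ne']
  ring

end basic


section group
variable {Ω Ω' Ω₁ Ω₂ Ω₃ Ω₄ : Type} [Fintype Ω] [Fintype Ω'] [Fintype Ω₁] [Fintype Ω₂] [Fintype Ω₃]
  [Fintype Ω₄] {A B C D : Type*} {G : Type} [AddCommGroup G]

/-- sum of two independent variables, on the product space. -/
def sm (X : Ω → G) (Y : Ω' → G) : Ω × Ω' → G := fun z => X z.1 + Y z.2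

/-- `X` is `l`-reduced. -/
def Red [Module (ZMod 2) G] (l : ℝ) (P : Ω → ℝ) (X : Ω → G) : Prop :=
  ∀ V : Submodule (ZMod 2) G,
    HH P X - HH P (fun ω => V.mkQ (X ω)) ≤ l * Real.log (Nat.card V)

/-- uniform bound on the doubling mass when the first variable is `l`-reduced. -/
def GoodAt (η l : ℝ) : Prop :=
  ∀ (G Ω Ω' : Type) [AddCommGroup G] [Finite G] [Module (ZMod 2) G] [Fintype Ω] [Fintype Ω']
    (μ : Ω → ℝ) (ν : Ω' → ℝ) (X : Ω → G) (Y : Ω' → G), IsP μ → IsP ν → Red l μ X →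
    HH μ X + HH ν Y - HH (pm μ ν) (sm X Y) ≤ η * (HH μ X + HH ν Y)

lemma HH_sm_comm (μ : Ω → ℝ) (ν : Ω' → ℝ) (X : Ω → G) (Y : Ω' → G) :
    HH (pm μ ν) (sm X Y) = HH (pm ν μ) (sm Y X) := by
  rw [← HH_mp (MP_swap μ ν)]
  congr 1; funext z; simp [sm, add_comm]

lemma HH_sm_left {μ : Ω → ℝ} {ν : Ω' → ℝ} (h : IsP μ) (h' : IsP ν) (X : Ω → G) (Y : Ω' → G) :
    HH μ X ≤ HH (pm μ ν) (sm X Y) := by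
  have h1 := HH_prod h h' X Y
  have h2 : HH (pm μ ν) (fun z => Y z.2) = HH ν Y := HH_mp (MP_snd h) Y
  have h3 := submod (isP_pm h h') (XA := sm X Y) (XB := fun z => Y z.2)
    (XC := fun z => (X z.1, Y z.2)) (XD := fun _ => ()) (by simp) (by simp) (by
      intro z z' _ _ e1 e2
      simp only [sm] at e1
      simp only [e2, add_left_inj] at e1
      simp [e1, e2])
  have h4 := HH_nonneg (isP_pm h h') (fun _ : Ω × Ω' => ())
  linarith

lemma HH_sm_right {μ : Ω → ℝ} {ν : Ω' → ℝ} (h : IsP μ) (h' : IsP ν) (X : Ω → G) (Y : Ω' → G) :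
    HH ν Y ≤ HH (pm μ ν) (sm X Y) := by
  rw [HH_sm_comm]; exact HH_sm_left h' h Y X

lemma HH_sm_le {μ : Ω → ℝ} {ν : Ω' → ℝ} (h : IsP μ) (h' : IsP ν) (X : Ω → G) (Y : Ω' → G) :
    HH (pm μ ν) (sm X Y) ≤ HH μ X + HH ν Y := by
  rw [← HH_prod h h']
  exact HH_le (isP_pm h h') fun z z' _ _ e => by
    simp only [Prod.mk.injEq] at e; simp [sm, e.1, e.2]

lemma HC_nonneg {P : Ω → ℝ} (hP : IsP P) (X : Ω → A) (U : Ω → B) : 0 ≤ HC P X U :=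
  sub_nonneg.2 (HH_le hP fun _ _ _ _ e => by simp only [Prod.mk.injEq] at e; exact e.2)

lemma HC_le {P : Ω → ℝ} (hP : IsP P) (X : Ω → A) (U : Ω → B) : HC P X U ≤ HH P X := by
  have := submod hP (XA := X) (XB := U) (XC := fun ω => (X ω, U ω)) (XD := fun _ => ())
    (by simp) (by simp) (by intro _ _ _ _ e e'; simp [e, e'])
  have h4 := HH_nonneg hP (fun _ : Ω => ())
  unfold HC; linarith

lemma HC_mono {P : Ω → ℝ} (hP : IsP P) {X : Ω → A} {Y : Ω → C} (U : Ω → B)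
    (h : ∀ ω ω', X ω = X ω' → Y ω = Y ω') : HC P Y U ≤ HC P X U := by
  unfold HC
  have := HH_le hP (X := fun ω => (Y ω, U ω)) (Y := fun ω => (X ω, U ω)) (by
    intro ω ω' _ _ e; simp only [Prod.mk.injEq] at e ⊢; exact ⟨h _ _ e.1, e.2⟩)
  linarith

lemma cd_pm_fst {μ : Ω → ℝ} {ν : Ω' → ℝ} (h' : IsP ν) (U : Ω → A) (z : Ω × Ω') :
    cd (pm μ ν) (fun z => U z.1) z = pm (cd μ U z.1) ν := by
  classical
  have q1 : pr (pm μ ν) (fun z => U z.1) z = pr μ U z.1 := by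
    have := MP_fst (μ := μ) h' (fun ω' => if U ω' = U z.1 then 1 else 0)
    simpa [pr] using this
  funext z'
  unfold cd pm
  rw [show pr (fun z : Ω × Ω' => μ z.1 * ν z.2) (fun z => U z.1) z = pr μ U z.1 from q1]
  by_cases hu : U z'.1 = U z.1
  · simp only [hu, if_true]; ring
  · simp only [hu, if_false]; ring

lemma cd_pm_snd {μ : Ω → ℝ} {ν : Ω' → ℝ} (h : IsP μ) (U : Ω' → A) (z : Ω × Ω') :
    cd (pm μ ν) (fun z => U z.2) z = pm μ (cd ν U z.2) := by
  classical
  have q1 : pr (pm μ ν) (fun z => U z.2) z = pr ν U z.2 := by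
    have := MP_snd (ν := ν) h (fun ω' => if U ω' = U z.2 then 1 else 0)
    simpa [pr] using this
  funext z'
  unfold cd pm
  rw [show pr (fun z : Ω × Ω' => μ z.1 * ν z.2) (fun z => U z.2) z = pr ν U z.2 from q1]
  by_cases hu : U z'.2 = U z.2
  · simp only [hu, if_true]; ring
  · simp only [hu, if_false]; ring

lemma HC_pm_fst {μ : Ω → ℝ} {ν : Ω' → ℝ} (h : IsP μ) (h' : IsP ν) (Z : Ω × Ω' → B) (U : Ω → A) :
    HC (pm μ ν) Z (fun z => U z.1) = ∑ ω, μ ω * HH (pm (cd μ U ω) ν) Z := by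
  rw [HC_eq (isP_pm h h')]
  simp only [cd_pm_fst h']
  exact MP_fst h' (fun ω => HH (pm (cd μ U ω) ν) Z)

lemma HC_pm_snd {μ : Ω → ℝ} {ν : Ω' → ℝ} (h : IsP μ) (h' : IsP ν) (Z : Ω × Ω' → B) (U : Ω' → A) :
    HC (pm μ ν) Z (fun z => U z.2) = ∑ ω, ν ω * HH (pm μ (cd ν U ω)) Z := by
  rw [HC_eq (isP_pm h h')]
  simp only [cd_pm_snd h]
  exact MP_snd h (fun ω => HH (pm μ (cd ν U ω)) Z)

/-- averaging over the conditioning of the second variable -/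
lemma lemAvg {μ : Ω → ℝ} {ν : Ω' → ℝ} (h : IsP μ) (h' : IsP ν) (X : Ω → G) (U : Ω → A)
    (Y : Ω' → G) (W : Ω' → B) (b : Ω' → ℝ)
    (hb : ∀ ω, 0 < ν ω → HC μ X U + HH (cd ν W ω) Y
      - HC (pm μ (cd ν W ω)) (sm X Y) (fun z => U z.1) ≤ b ω) :
    HC μ X U + HC ν Y W - HC (pm μ ν) (sm X Y) (fun z => (U z.1, W z.2)) ≤ ∑ ω, ν ω * b ω := by
  have e1 : HC (pm μ ν) (sm X Y) (fun z => (U z.1, W z.2)) =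
      HC (pm μ ν) (fun z => (sm X Y z, U z.1)) (fun z => W z.2) - HH μ U := by
    unfold HC
    rw [HH_prod h h', show HH (pm μ ν) (fun z => W z.2) = HH ν W from HH_mp (MP_snd h) W,
      HH_congr (X := fun z => (sm X Y z, (U z.1, W z.2)))
        (Y := fun z => ((sm X Y z, U z.1), W z.2)) (by intros; simp [and_assoc])]
    ring
  rw [e1, HC_pm_snd h h', HC_eq h']
  have e2 : ∑ ω, ν ω * (HC μ X U + HH (cd ν W ω) Y
      - HC (pm μ (cd ν W ω)) (sm X Y) (fun z => U z.1)) ≤ ∑ ω, ν ω * b ω := by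
    refine Finset.sum_le_sum fun ω _ => ?_
    rcases (h'.1 ω).eq_or_lt with h00 | h00
    · simp [← h00]
    exact mul_le_mul_of_nonneg_left (hb ω h00) h00.le
  refine le_trans (le_of_eq ?_) e2
  have e3 : ∀ ω, ν ω * (HC μ X U + HH (cd ν W ω) Y
      - HC (pm μ (cd ν W ω)) (sm X Y) (fun z => U z.1)) =
      ν ω * HC μ X U + ν ω * HH (cd ν W ω) Y
        - (ν ω * HH (pm μ (cd ν W ω)) (fun z => (sm X Y z, U z.1)) - ν ω * HH μ U) := by
    intro ω
    rcases (h'.1 ω).eq_or_lt with h00 | h00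
    · simp [← h00]
    rw [show HC (pm μ (cd ν W ω)) (sm X Y) (fun z => U z.1) =
      HH (pm μ (cd ν W ω)) (fun z => (sm X Y z, U z.1)) - HH μ U by
        unfold HC
        rw [show HH (pm μ (cd ν W ω)) (fun z => U z.1) = HH μ U from
          HH_mp (MP_fst (isP_cd h' W h00)) U]]
    ring
  simp only [e3, Finset.sum_sub_distrib, Finset.sum_add_distrib, ← Finset.sum_mul, h'.2]
  ring

lemma HC_sum_bound {P : Ω → ℝ} (hP : IsP P) (Z : Ω → B) (f g : Ω → ℝ)
    (h : ∀ ω, 0 < P ω → f ω ≤ g ω) : ∑ ω, P ω * f ω ≤ ∑ ω, P ω * g ω := by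
  refine Finset.sum_le_sum fun ω _ => ?_
  rcases (hP.1 ω).eq_or_lt with h00 | h00
  · simp [← h00]
  exact mul_le_mul_of_nonneg_left (h ω h00) h00.le

/-- cost of passing to a quotient -/
lemma lemK [Module (ZMod 2) G] {μ : Ω → ℝ} {ν : Ω' → ℝ} (h : IsP μ) (h' : IsP ν) (X : Ω → G)
    (U : Ω → A) (Y : Ω' → G) (V : Submodule (ZMod 2) G) :
    HC μ X U + HH ν Y - HC (pm μ ν) (sm X Y) (fun z => U z.1) ≤
      (HH μ X - HH μ (fun ω => V.mkQ (X ω))) +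
      (HC μ (fun ω => V.mkQ (X ω)) U + HH ν (fun ω => V.mkQ (Y ω))
        - HC (pm μ ν) (sm (fun ω => V.mkQ (X ω)) (fun ω => V.mkQ (Y ω))) (fun z => U z.1)) := by
  have h1 := submod h (XA := fun ω => (V.mkQ (X ω), U ω)) (XB := X) (XC := fun ω => (X ω, U ω))
    (XD := fun ω => V.mkQ (X ω)) (by intro _ _ _ _ e; exact (Prod.mk.inj e).1)
    (by intro _ _ _ _ e; simp [e]) (by
      intro _ _ _ _ e e'; simp only [Prod.mk.injEq] at e ⊢; exact ⟨e', e.2⟩)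
  have h2 := submod (isP_pm h h') (XA := fun z => (sm X Y z, U z.1))
    (XB := fun z => ((X z.1, U z.1), V.mkQ (Y z.2)))
    (XC := fun z => ((X z.1, U z.1), Y z.2))
    (XD := fun z => (sm (fun ω => V.mkQ (X ω)) (fun ω => V.mkQ (Y ω)) z, U z.1))
    (by intro z z' _ _ e
        simp only [Prod.mk.injEq, sm] at e ⊢
        exact ⟨by rw [← map_add, e.1, map_add], e.2⟩)
    (by intro z z' _ _ e
        simp only [Prod.mk.injEq, sm] at e ⊢
        exact ⟨by rw [e.1.1, e.2], e.1.2⟩)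
    (by intro z z' _ _ e e'
        simp only [Prod.mk.injEq, sm] at e e' ⊢
        refine ⟨e'.1, ?_⟩
        have := e.1
        rw [e'.1.1] at this
        exact add_left_cancel this)
  rw [HH_prod h h' (fun ω => (X ω, U ω)) Y,
    HH_prod h h' (fun ω => (X ω, U ω)) (fun ω => V.mkQ (Y ω))] at h2
  unfold HC
  linarith

lemma HC_unit {P : Ω → ℝ} (hP : IsP P) (X : Ω → A) : HC P X (fun _ => ()) = HH P X := by
  unfold HC
  have h1 : HH P (fun _ : Ω => ()) = 0 := by
    have : ∀ ω, pr P (fun _ : Ω => ()) ω = 1 := by intro ω; simp [pr, hP.2]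
    simp [HH, this]
  rw [h1, sub_zero]
  exact HH_congr (by simp)

/-- unconditional version -/
lemma lemK0 [Module (ZMod 2) G] {μ : Ω → ℝ} {ν : Ω' → ℝ} (h : IsP μ) (h' : IsP ν) (X : Ω → G)
    (Y : Ω' → G) (V : Submodule (ZMod 2) G) :
    HH μ X + HH ν Y - HH (pm μ ν) (sm X Y) ≤
      (HH μ X - HH μ (fun ω => V.mkQ (X ω))) +
      (HH μ (fun ω => V.mkQ (X ω)) + HH ν (fun ω => V.mkQ (Y ω))
        - HH (pm μ ν) (sm (fun ω => V.mkQ (X ω)) (fun ω => V.mkQ (Y ω)))) := by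
  have := lemK h h' X (fun _ => ()) Y V
  have e : (fun z : Ω × Ω' => (fun _ : Ω => ()) z.1) = fun _ => () := rfl
  simp only [HC_unit h, HC_unit (isP_pm h h')] at this
  exact this

lemma exists_red [Finite G] [Module (ZMod 2) G] {ι : Type} [Fintype ι] {P : Ω → ℝ} (hP : IsP P)
    (X : ι → Ω → G) (l : ℝ) :
    ∃ V : Submodule (ZMod 2) G,
      l * Real.log (Nat.card V) ≤ ∑ i, HH P (X i) - ∑ i, HH P (fun ω => V.mkQ (X i ω)) ∧
      ∀ i, Red l P (fun ω => V.mkQ (X i ω)) := by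
  obtain ⟨V, hV⟩ := Finite.exists_max (fun V : Submodule (ZMod 2) G =>
    - ∑ i, HH P (fun ω => V.mkQ (X i ω)) - l * Real.log (Nat.card V))
  refine ⟨V, ?_, ?_⟩
  · have := hV ⊥
    have e : ∀ i, HH P (fun ω => (⊥ : Submodule (ZMod 2) G).mkQ (X i ω)) = HH P (X i) := fun i =>
      HH_congr fun ω ω' => by
        simp only [Submodule.mkQ_apply, Submodule.Quotient.eq, Submodule.mem_bot, sub_eq_zero]
    simp only [e] at this
    simp at this
    simp
    linarith
  · intro i V'
    haveI : Finite (G ⧸ V) := Finite.of_surjective _ (Submodule.mkQ_surjective V)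
    haveI : Finite ((G ⧸ V) ⧸ V') := Finite.of_surjective _ (Submodule.mkQ_surjective V')
    haveI : Finite V' := Subtype.finite
    have := hV (V'.comap V.mkQ)
    have e : ∀ j, HH P (fun ω => (V'.comap V.mkQ).mkQ (X j ω)) =
        HH P (fun ω => V'.mkQ (V.mkQ (X j ω))) := fun j =>
      HH_congr fun ω ω' => by
        simp only [Submodule.mkQ_apply, Submodule.Quotient.eq, Submodule.mem_comap, map_sub]
    have hc : Nat.card (V'.comap V.mkQ) = Nat.card V * Nat.card V' := by
      have h1 := Submodule.card_eq_card_quotient_mul_card (V'.comap V.mkQ)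
      have h2 := Submodule.card_eq_card_quotient_mul_card V
      have h3 := Submodule.card_eq_card_quotient_mul_card V'
      have h4 : Nat.card (G ⧸ V'.comap V.mkQ) = Nat.card ((G ⧸ V) ⧸ V') := by
        have hs : Function.Surjective (V'.mkQ.comp V.mkQ) :=
          (Submodule.mkQ_surjective _).comp (Submodule.mkQ_surjective _)
        have hk : LinearMap.ker (V'.mkQ.comp V.mkQ) = V'.comap V.mkQ := by
          rw [LinearMap.ker_comp, Submodule.ker_mkQ]
        rw [← hk]
        exact Nat.card_congr (LinearMap.quotKerEquivOfSurjective _ hs).toEquiv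
      have h5 : 0 < Nat.card ((G ⧸ V) ⧸ V') := Nat.card_pos
      rw [h4] at h1
      rw [h3] at h2
      have := h1.symm.trans h2
      apply Nat.eq_of_mul_eq_mul_left h5
      nlinarith
    simp only [e, hc] at this
    have p1 : (0:ℝ) < Nat.card V := by exact_mod_cast Nat.card_pos
    have p2 : (0:ℝ) < Nat.card V' := by exact_mod_cast Nat.card_pos
    push_cast at this
    rw [Real.log_mul p1.ne' p2.ne'] at this
    have hs : HH P (fun ω => V.mkQ (X i ω)) - HH P (fun ω => V'.mkQ (V.mkQ (X i ω))) ≤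
        ∑ j, (HH P (fun ω => V.mkQ (X j ω)) - HH P (fun ω => V'.mkQ (V.mkQ (X j ω)))) :=
      Finset.single_le_sum (f := fun j =>
        HH P (fun ω => V.mkQ (X j ω)) - HH P (fun ω => V'.mkQ (V.mkQ (X j ω))))
        (fun j _ => sub_nonneg.2 (HH_le hP fun _ _ _ _ e => by simp only [e])) (Finset.mem_univ i)
    rw [Finset.sum_sub_distrib] at hs
    linarith

lemma Red_mp [Module (ZMod 2) G] {l : ℝ} {e : Ω → Ω'} {P : Ω → ℝ} {P' : Ω' → ℝ} (h : MP e P P')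
    {X : Ω' → G} : Red l P (fun ω => X (e ω)) ↔ Red l P' X := by
  unfold Red
  refine forall_congr' fun V => ?_
  rw [HH_mp h X, HH_mp h (fun ω => V.mkQ (X ω))]

lemma lemL [Finite G] [Module (ZMod 2) G] {η l ε : ℝ} (hη : 0 ≤ η) (hl : 0 < l) (hε : 0 ≤ ε)
    (hg : GoodAt η l) {μ : Ω → ℝ} {ν : Ω' → ℝ} (h : IsP μ) (h' : IsP ν) (X : Ω → G)
    (U : Ω → A) (Y : Ω' → G) (hr : Red (ε * l) μ X) :
    HC μ X U + HH ν Y - HC (pm μ ν) (sm X Y) (fun z => U z.1) ≤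
      (η + ε) * (HC μ X U + HH ν Y) := by
  obtain ⟨V, hV, hV'⟩ := exists_red (ι := Unit) h' (fun _ => Y) l
  haveI : Finite (G ⧸ V) := Finite.of_surjective _ (Submodule.mkQ_surjective V)
  simp only [Finset.univ_unique, Finset.sum_singleton] at hV
  have hV'' := hV' ()
  have k := lemK h h' X U Y V
  have r := hr V
  have p1 := HH_nonneg h' (fun ω => V.mkQ (Y ω))
  have p2 : HC μ (fun ω => V.mkQ (X ω)) U ≤ HC μ X U := HC_mono h U (by intro _ _ e; simp [e])
  have p3 := HC_nonneg h X U
  have p4 : HH ν (fun ω => V.mkQ (Y ω)) ≤ HH ν Y := HH_le h' (by intro _ _ _ _ e; simp [e])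
  have b : HC μ (fun ω => V.mkQ (X ω)) U + HH ν (fun ω => V.mkQ (Y ω))
        - HC (pm μ ν) (sm (fun ω => V.mkQ (X ω)) (fun ω => V.mkQ (Y ω))) (fun z => U z.1)
      ≤ η * (HC μ (fun ω => V.mkQ (X ω)) U + HH ν (fun ω => V.mkQ (Y ω))) := by
    rw [HC_pm_fst h h', HC_eq h]
    have := HC_sum_bound h U
      (fun ω => HH (cd μ U ω) (fun ω => V.mkQ (X ω)) + HH ν (fun ω => V.mkQ (Y ω)) -
        HH (pm (cd μ U ω) ν) (sm (fun ω => V.mkQ (X ω)) (fun ω => V.mkQ (Y ω))))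
      (fun ω => η * (HH (cd μ U ω) (fun ω => V.mkQ (X ω)) + HH ν (fun ω => V.mkQ (Y ω)))) (by
        intro ω hω
        have := hg (G ⧸ V) Ω' Ω ν (cd μ U ω) (fun ω => V.mkQ (Y ω)) (fun ω => V.mkQ (X ω)) h'
          (isP_cd h U hω) hV''
        rw [HH_sm_comm] at this
        linarith)
    simp only [mul_sub, mul_add, Finset.sum_sub_distrib, Finset.sum_add_distrib, ← Finset.sum_mul,
      h.2, one_mul] at this
    simp only [mul_left_comm _ η, ← Finset.mul_sum] at this
    linarith
  have c : ε * l * Real.log (Nat.card V) ≤ ε * HH ν Y := by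
    rw [mul_assoc]; exact mul_le_mul_of_nonneg_left (by linarith) hε
  nlinarith [mul_le_mul_of_nonneg_left p2 hη, mul_le_mul_of_nonneg_left p4 hη, mul_nonneg hε p3]

lemma lemM [Finite G] [Module (ZMod 2) G] {η l ε : ℝ} (hη : η < 1/2) (hl : 0 < l) (hε : 0 ≤ ε)
    (hg : GoodAt η l) {μ : Ω → ℝ} {ν : Ω' → ℝ} (h : IsP μ) (h' : IsP ν) (X : Ω → G)
    (U : Ω → A) (Y : Ω' → G) (hr : Red (ε * l) μ X) :
    HC μ X U + HH ν Y - HC (pm μ ν) (sm X Y) (fun z => U z.1) ≤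
      ε * HH ν Y + (HH (pm ν ν) (sm Y Y) - HH ν Y) / (1 - 2 * η) := by
  obtain ⟨V, hV, hV'⟩ := exists_red (ι := Unit) h' (fun _ => Y) l
  haveI : Finite (G ⧸ V) := Finite.of_surjective _ (Submodule.mkQ_surjective V)
  simp only [Finset.univ_unique, Finset.sum_singleton] at hV
  have hV'' := hV' ()
  have k := lemK h h' X U Y V
  have r := hr V
  have p1 := HH_nonneg h' (fun ω => V.mkQ (Y ω))
  have p2 : HC μ (fun ω => V.mkQ (X ω)) U ≤
      HC (pm μ ν) (sm (fun ω => V.mkQ (X ω)) (fun ω => V.mkQ (Y ω))) (fun z => U z.1) := by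
    rw [HC_pm_fst h h', HC_eq h]
    exact HC_sum_bound h U _ _ fun ω hω => HH_sm_left (isP_cd h U hω) h' _ _
  have g := hg (G ⧸ V) Ω' Ω' ν ν (fun ω => V.mkQ (Y ω)) (fun ω => V.mkQ (Y ω)) h' h' hV''
  have k2 := lemK0 h' h' Y Y V
  have c : ε * l * Real.log (Nat.card V) ≤ ε * HH ν Y := by
    rw [mul_assoc]; exact mul_le_mul_of_nonneg_left (by linarith) hε
  have : HH ν (fun ω => V.mkQ (Y ω)) ≤ (HH (pm ν ν) (sm Y Y) - HH ν Y) / (1 - 2 * η) := by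
    rw [le_div_iff₀ (by linarith)]
    linarith
  linarith

lemma lemC [Finite G] [Module (ZMod 2) G] {η l ε : ℝ} (hη : 0 ≤ η) (hl : 0 < l) (hε : 0 ≤ ε)
    (hg : GoodAt η l) {μ : Ω → ℝ} {ν : Ω' → ℝ} (h : IsP μ) (h' : IsP ν) (X : Ω → G)
    (U : Ω → A) (Y : Ω' → G) (W : Ω' → B) (hr : Red (ε * l) μ X) :
    HC μ X U + HC ν Y W - HC (pm μ ν) (sm X Y) (fun z => (U z.1, W z.2)) ≤
      (η + ε) * (HC μ X U + HC ν Y W) := by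
  refine (lemAvg h h' X U Y W (fun ω => (η + ε) * (HC μ X U + HH (cd ν W ω) Y)) ?_).trans ?_
  · intro ω hω
    exact lemL hη hl hε hg h (isP_cd h' W hω) X U Y hr
  · rw [HC_eq h' Y W]
    apply le_of_eq
    simp only [mul_add, mul_left_comm _ (η + ε), Finset.sum_add_distrib, ← Finset.mul_sum,
      ← Finset.sum_mul, h'.2, one_mul]

lemma lemM' [Finite G] [Module (ZMod 2) G] {η l ε : ℝ} (hη : η < 1/2) (hl : 0 < l) (hε : 0 ≤ ε)
    (hg : GoodAt η l) {μ : Ω → ℝ} {ν : Ω' → ℝ} (h : IsP μ) (h' : IsP ν) (X : Ω → G)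
    (U : Ω → A) (Y : Ω' → G) (W : Ω' → B) (hr : Red (ε * l) μ X) :
    HC μ X U + HC ν Y W - HC (pm μ ν) (sm X Y) (fun z => (U z.1, W z.2)) ≤
      ε * HC ν Y W + (∑ ω, ν ω * (HH (pm (cd ν W ω) (cd ν W ω)) (sm Y Y) - HH (cd ν W ω) Y))
        / (1 - 2 * η) := by
  refine (lemAvg h h' X U Y W (fun ω => ε * HH (cd ν W ω) Y +
    (HH (pm (cd ν W ω) (cd ν W ω)) (sm Y Y) - HH (cd ν W ω) Y) / (1 - 2 * η)) ?_).trans ?_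
  · intro ω hω
    exact lemM hη hl hε hg h (isP_cd h' W hω) X U Y hr
  · rw [HC_eq h' Y W]
    apply le_of_eq
    simp only [mul_add, mul_left_comm _ ε, Finset.sum_add_distrib, ← Finset.mul_sum,
      ← mul_div_assoc, ← Finset.sum_div]

end group


section fibring
variable {Ω Ω₁ Ω₂ Ω₃ Ω₄ : Type} [Fintype Ω] [Fintype Ω₁] [Fintype Ω₂] [Fintype Ω₃]
  [Fintype Ω₄] {A B C D : Type*} {G : Type} [AddCommGroup G]

/-- conditional Kaimanovich–Vershik inequality -/
lemma KVc {a : Ω₁ → ℝ} {b : Ω₂ → ℝ} {c : Ω₃ → ℝ} (ha : IsP a) (hb : IsP b) (hc : IsP c)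
    (X : Ω₁ → G) (Y : Ω₂ → G) (Z : Ω₃ → G) (α : Ω₁ → A) (β : Ω₂ → B) (γ : Ω₃ → C) :
    HH (pm a (pm b c)) (fun z => (sm X (sm Y Z) z, (α z.1, (β z.2.1, γ z.2.2))))
      + HH b (fun z => (Y z, β z)) ≤
    HH (pm b c) (fun z => (sm Y Z z, (β z.1, γ z.2)))
      + HH (pm a b) (fun z => (sm X Y z, (α z.1, β z.2))) := by
  have h1 := submod (isP_pm ha (isP_pm hb hc))
    (XA := fun z => ((X z.1, α z.1), (sm Y Z z.2, (β z.2.1, γ z.2.2))))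
    (XB := fun z => ((sm X Y (z.1, z.2.1), (α z.1, β z.2.1)), (Z z.2.2, γ z.2.2)))
    (XC := fun z => ((X z.1, α z.1), ((Y z.2.1, β z.2.1), (Z z.2.2, γ z.2.2))))
    (XD := fun z => (sm X (sm Y Z) z, (α z.1, (β z.2.1, γ z.2.2))))
    (by intro z z' _ _ e; simp only [sm, Prod.mk.injEq] at e ⊢; simp [e])
    (by intro z z' _ _ e
        simp only [sm, Prod.mk.injEq] at e ⊢
        simp only [← add_assoc]
        simp [e])
    (by intro z z' _ _ e e'
        simp only [sm, Prod.mk.injEq] at e e' ⊢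
        have := e'.1.1
        rw [e.1.1] at this
        simp [e, e', add_left_cancel this])
  rw [HH_prod ha (isP_pm hb hc) (fun z => (X z, α z)) (fun z => (sm Y Z z, (β z.1, γ z.2))),
    HH_prod ha (isP_pm hb hc) (fun z => (X z, α z)) (fun z => ((Y z.1, β z.1), (Z z.2, γ z.2))),
    HH_prod hb hc (fun z => (Y z, β z)) (fun z => (Z z, γ z)),
    show HH (pm a (pm b c)) (fun z => ((sm X Y (z.1, z.2.1), (α z.1, β z.2.1)), (Z z.2.2, γ z.2.2)))
      = HH (pm (pm a b) c) (fun z => ((sm X Y z.1, (α z.1.1, β z.1.2)), (Z z.2, γ z.2))) from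
      HH_mp (MP_assoc' a b c) (fun z => ((sm X Y z.1, (α z.1.1, β z.1.2)), (Z z.2, γ z.2))),
    HH_prod (isP_pm ha hb) hc (fun z => (sm X Y z, (α z.1, β z.2))) (fun z => (Z z, γ z))] at h1
  linarith

lemma KV {a : Ω₁ → ℝ} {b : Ω₂ → ℝ} {c : Ω₃ → ℝ} (ha : IsP a) (hb : IsP b) (hc : IsP c)
    (X : Ω₁ → G) (Y : Ω₂ → G) (Z : Ω₃ → G) :
    HH (pm a (pm b c)) (sm X (sm Y Z)) + HH b Y ≤
    HH (pm b c) (sm Y Z) + HH (pm a b) (sm X Y) := by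
  have := KVc ha hb hc X Y Z (fun _ => ()) (fun _ => ()) (fun _ => ())
  rw [HH_congr (P := pm a (pm b c)) (Y := sm X (sm Y Z)) (by simp),
    HH_congr (P := pm b c) (Y := sm Y Z) (by simp),
    HH_congr (P := b) (Y := Y) (by simp), HH_congr (P := pm a b) (Y := sm X Y) (by simp)] at this
  exact this

lemma HC_self_sum {a : Ω₁ → ℝ} {b : Ω₂ → ℝ} (ha : IsP a) (hb : IsP b) (X : Ω₁ → G) (Y : Ω₂ → G) :
    HC (pm a b) (fun z => X z.1) (sm X Y) = HH a X + HH b Y - HH (pm a b) (sm X Y) := by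
  unfold HC
  rw [← HH_prod ha hb X Y]
  congr 1
  exact HH_congr fun z z' => by
    simp only [Prod.mk.injEq, sm]
    constructor
    · rintro ⟨e1, e2⟩; rw [e1] at e2; exact ⟨e1, add_left_cancel e2⟩
    · rintro ⟨e1, e2⟩; simp [e1, e2]

/-- swapping the middle two coordinates -/
lemma MP_mid (a : Ω₁ → ℝ) (b : Ω₂ → ℝ) (c : Ω₃ → ℝ) (d : Ω₄ → ℝ) :
    MP (fun z : (Ω₁ × Ω₂) × (Ω₃ × Ω₄) => ((z.1.1, z.2.1), (z.1.2, z.2.2)))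
      (pm (pm a b) (pm c d)) (pm (pm a c) (pm b d)) := fun f => by
  simp only [pm, Fintype.sum_prod_type]
  refine Finset.sum_congr rfl fun x _ => ?_
  rw [Finset.sum_comm]
  refine Finset.sum_congr rfl fun y _ => Finset.sum_congr rfl fun z _ =>
    Finset.sum_congr rfl fun w _ => by ring

section
variable {a : Ω₁ → ℝ} {b : Ω₂ → ℝ} {c : Ω₃ → ℝ} {d : Ω₄ → ℝ} 

lemma HH_SS (X₁ : Ω₁ → G) (X₂ : Ω₂ → G) (X₃ : Ω₃ → G) (X₄ : Ω₄ → G) : HH (pm (pm a b) (pm c d)) (sm (sm X₁ X₂) (sm X₃ X₄)) =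
    HH (pm (pm a c) (pm b d)) (sm (sm X₁ X₃) (sm X₂ X₄)) := by
  rw [← HH_mp (MP_mid a b c d)]
  congr 1; funext z; simp only [sm]; abel

lemma HH_VS (ha : IsP a) (hb : IsP b) (hc : IsP c) (hd : IsP d)
    (X₁ : Ω₁ → G) (X₂ : Ω₂ → G) (X₃ : Ω₃ → G) (X₄ : Ω₄ → G) : HH (pm (pm a b) (pm c d)) (fun z => (sm X₁ X₂ z.1, sm (sm X₁ X₂) (sm X₃ X₄) z)) =
    HH (pm a b) (sm X₁ X₂) + HH (pm c d) (sm X₃ X₄) := by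
  refine HH_prod' (isP_pm ha hb) (isP_pm hc hd) _ _ _ fun z z' => ?_
  simp only [Prod.mk.injEq, sm]
  constructor
  · rintro ⟨e1, e2⟩; rw [e1] at e2; exact ⟨e1, add_left_cancel e2⟩
  · rintro ⟨e1, e2⟩; simp [e1, e2]

lemma HH_US (ha : IsP a) (hb : IsP b) (hc : IsP c) (hd : IsP d)
    (X₁ : Ω₁ → G) (X₂ : Ω₂ → G) (X₃ : Ω₃ → G) (X₄ : Ω₄ → G) : HH (pm (pm a b) (pm c d)) (fun z => (X₁ z.1.1 + X₃ z.2.1,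
      sm (sm X₁ X₂) (sm X₃ X₄) z)) =
    HH (pm a c) (sm X₁ X₃) + HH (pm b d) (sm X₂ X₄) := by
  rw [← HH_VS ha hc hb hd, ← HH_mp (MP_mid a b c d)]
  congr 1; funext z; simp only [sm, Prod.mk.injEq, true_and]; abel

lemma MP_sw (a : Ω₁ → ℝ) (b : Ω₂ → ℝ) (c : Ω₃ → ℝ) (d : Ω₄ → ℝ) :
    MP (fun z : (Ω₁ × Ω₂) × (Ω₃ × Ω₄) => ((z.1.1, z.1.2), (z.2.2, z.2.1)))
      (pm (pm a b) (pm c d)) (pm (pm a b) (pm d c)) :=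
  MP_prod (MP_id _) (MP_swap c d)

lemma HH_WS (ha : IsP a) (hb : IsP b) (hc : IsP c) (hd : IsP d)
    (X₁ : Ω₁ → G) (X₂ : Ω₂ → G) (X₃ : Ω₃ → G) (X₄ : Ω₄ → G) : HH (pm (pm a b) (pm c d)) (fun z => (X₁ z.1.1 + X₄ z.2.2,
      sm (sm X₁ X₂) (sm X₃ X₄) z)) =
    HH (pm a d) (sm X₁ X₄) + HH (pm b c) (sm X₂ X₃) := by
  rw [← HH_US ha hb hd hc, ← HH_mp (MP_sw a b c d)]
  congr 1; funext z; simp only [sm, Prod.mk.injEq, true_and]; abel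

/-- the conditional entropy of `X₁ + X₃` given `X₁ + X₂`, `X₃ + X₄`. -/
def FJ (a : Ω₁ → ℝ) (b : Ω₂ → ℝ) (c : Ω₃ → ℝ) (d : Ω₄ → ℝ)
    (X₁ : Ω₁ → G) (X₂ : Ω₂ → G) (X₃ : Ω₃ → G) (X₄ : Ω₄ → G) : ℝ :=
  HC (pm (pm a b) (pm c d)) (sm (fun z : Ω₁ × Ω₂ => X₁ z.1) (fun z : Ω₃ × Ω₄ => X₃ z.1))
    (fun z => (sm X₁ X₂ z.1, sm X₃ X₄ z.2))

lemma fib (ha : IsP a) (hb : IsP b) (hc : IsP c) (hd : IsP d)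
    (X₁ : Ω₁ → G) (X₂ : Ω₂ → G) (X₃ : Ω₃ → G) (X₄ : Ω₄ → G) : FJ a b c d X₁ X₂ X₃ X₄ + HH (pm (pm a b) (pm c d)) (sm (sm X₁ X₂) (sm X₃ X₄)) ≤
    HH (pm a c) (sm X₁ X₃) + HH (pm b d) (sm X₂ X₄) := by
  unfold FJ HC
  rw [HH_prod (isP_pm ha hb) (isP_pm hc hd), ← HH_VS ha hb hc hd, ← HH_US ha hb hc hd]
  have := submod (isP_pm (isP_pm ha hb) (isP_pm hc hd))
    (XA := fun z => (X₁ z.1.1 + X₃ z.2.1, sm (sm X₁ X₂) (sm X₃ X₄) z))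
    (XB := fun z => (sm X₁ X₂ z.1, sm (sm X₁ X₂) (sm X₃ X₄) z))
    (XC := fun z => (sm (fun z : Ω₁ × Ω₂ => X₁ z.1) (fun z : Ω₃ × Ω₄ => X₃ z.1) z,
      (sm X₁ X₂ z.1, sm X₃ X₄ z.2)))
    (XD := sm (sm X₁ X₂) (sm X₃ X₄))
    (by intro z z' _ _ e; exact (Prod.mk.inj e).2)
    (by intro z z' _ _ e; exact (Prod.mk.inj e).2)
    (by intro z z' _ _ e e'
        simp only [sm, Prod.mk.injEq] at e e' ⊢
        refine ⟨e.1, e'.1, ?_⟩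
        have := e'.2
        rw [e'.1] at this
        exact add_left_cancel this)
  linarith

end

/-- coupling of two copies conditionally independent given `Z`. -/
def cpl (P : Ω → ℝ) (Z : Ω → A) : Ω × Ω → ℝ := fun z => P z.1 * cd P Z z.1 z.2

lemma cpl_symm (P : Ω → ℝ) (Z : Ω → A) (x y : Ω) : cpl P Z (x, y) = cpl P Z (y, x) := by
  classical
  unfold cpl cd
  by_cases h : Z y = Z x
  · simp only [h, if_true, pr_congr h]; ring
  · have h' : ¬ Z x = Z y := fun e => h e.symm
    simp [h, h']

lemma cpl_sum {P : Ω → ℝ} (hP : IsP P) (Z : Ω → A) : MP Prod.fst (cpl P Z) P := fun f => by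
  simp only [cpl, Fintype.sum_prod_type]
  refine Finset.sum_congr rfl fun x _ => ?_
  rcases (hP.1 x).eq_or_lt with h0 | h0
  · simp [← h0]
  · rw [← Finset.sum_mul, ← Finset.mul_sum, (isP_cd hP Z h0).2, mul_one]

lemma cpl_sum' {P : Ω → ℝ} (hP : IsP P) (Z : Ω → A) : MP Prod.snd (cpl P Z) P := fun f => by
  rw [← cpl_sum hP Z]
  simp only [Fintype.sum_prod_type]
  rw [Finset.sum_comm]
  exact Finset.sum_congr rfl fun x _ => Finset.sum_congr rfl fun y _ => by rw [cpl_symm]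

lemma isP_cpl {P : Ω → ℝ} (hP : IsP P) (Z : Ω → A) : IsP (cpl P Z) := by
  refine ⟨fun z => ?_, ?_⟩
  · unfold cpl
    rcases (hP.1 z.1).eq_or_lt with h0 | h0
    · simp [← h0]
    · exact mul_nonneg h0.le ((isP_cd hP Z h0).1 _)
  · have := cpl_sum hP Z (fun _ => 1)
    simpa [hP.2] using this

lemma cpl_supp {P : Ω → ℝ} (Z : Ω → A) {z : Ω × Ω} (h : 0 < cpl P Z z) :
    Z z.1 = Z z.2 := by
  classical
  unfold cpl cd at h
  by_contra e
  have : ¬ Z z.2 = Z z.1 := fun h => e h.symm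
  simp [this] at h

lemma cpl_cd {P : Ω → ℝ} (hP : IsP P) (Z : Ω → A) (z : Ω × Ω) :
    cd (cpl P Z) (fun z => Z z.1) z = pm (cd P Z z.1) (cd P Z z.1) := by
  classical
  have q1 : pr (cpl P Z) (fun z => Z z.1) z = pr P Z z.1 := by
    have := cpl_sum hP Z (fun ω' => if Z ω' = Z z.1 then 1 else 0)
    simpa [pr] using this
  funext w
  rw [cd, q1]
  unfold pm cpl cd
  by_cases h : Z w.1 = Z z.1
  · by_cases h2 : Z w.2 = Z z.1
    · simp only [h, h2, if_true, pr_congr h]; ring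
    · simp [h, h2]
  · simp [h]

lemma cpl_HC {P : Ω → ℝ} (hP : IsP P) (Z : Ω → A) (X : Ω × Ω → B) :
    HC (cpl P Z) X (fun z => Z z.1) = ∑ ω, P ω * HH (pm (cd P Z ω) (cd P Z ω)) X := by
  rw [HC_eq (isP_cpl hP Z)]
  simp only [cpl_cd hP]
  exact cpl_sum hP Z (fun ω => HH (pm (cd P Z ω) (cd P Z ω)) X)

lemma cpl_HH {P : Ω → ℝ} (hP : IsP P) (Z : Ω → A) (f : Ω → B) (g : Ω → C) :
    HC (cpl P Z) (fun z => (f z.1, g z.2)) (fun z => Z z.1) = HC P f Z + HC P g Z := by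
  rw [cpl_HC hP, HC_eq hP, HC_eq hP, ← Finset.sum_add_distrib]
  refine Finset.sum_congr rfl fun ω _ => ?_
  rcases (hP.1 ω).eq_or_lt with h0 | h0
  · simp [← h0]
  rw [HH_prod (isP_cd hP Z h0) (isP_cd hP Z h0), mul_add]

/-- entropic Balog–Szemerédi–Gowers -/
lemma BSG {P : Ω → ℝ} (hP : IsP P) (X Y : Ω → G) (S : Ω → B) (Z : Ω → A)
    (hZ : ∀ ω ω', Z ω = Z ω' ↔ (X ω + Y ω = X ω' + Y ω' ∧ S ω = S ω'))
    (h2 : ∀ g : G, g + g = 0) :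
    ∑ ω, P ω * (HH (pm (cd P Z ω) (cd P Z ω)) (sm X X) - HH (cd P Z ω) X) ≤
      2 * (HH P (fun ω => (X ω, S ω)) + HH P (fun ω => (Y ω, S ω)) + HH P Z) - 3 * HH P S
        - 3 * HH P (fun ω => (X ω, (Y ω, S ω))) := by
  have e0 : ∑ ω, P ω * (HH (pm (cd P Z ω) (cd P Z ω)) (sm X X) - HH (cd P Z ω) X) =
      HC (cpl P Z) (sm X X) (fun z => Z z.1) - HC P X Z := by
    rw [cpl_HC hP, HC_eq hP, ← Finset.sum_sub_distrib]
    simp only [mul_sub]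
  have hn : ∀ g : G, -g = g := fun g => by rw [neg_eq_iff_add_eq_zero]; exact h2 g
  have hs : ∀ g h : G, g - h = g + h := fun g h => by rw [sub_eq_add_neg, hn]
  set Q := cpl P Z with hQ
  have iQ : IsP Q := isP_cpl hP Z
  have sp : ∀ z : Ω × Ω, 0 < Q z → X z.1 + Y z.1 = X z.2 + Y z.2 ∧ S z.1 = S z.2 := fun z h =>
    (hZ _ _).1 (cpl_supp Z h)
  -- on the support `X z.1 + Y z.2 = X z.2 + Y z.1`
  have sp2 : ∀ z : Ω × Ω, 0 < Q z → X z.1 + Y z.2 = X z.2 + Y z.1 := fun z h => by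
    have := (sp z h).1
    have e : X z.1 = X z.2 + Y z.2 - Y z.1 := by rw [← this]; abel
    rw [e, hs]
    have := h2 (Y z.2)
    calc X z.2 + Y z.2 + Y z.1 + Y z.2 = X z.2 + Y z.1 + (Y z.2 + Y z.2) := by abel
      _ = _ := by rw [this, add_zero]
  have hXZ : HH P (fun ω => (X ω, Z ω)) = HH P (fun ω => (X ω, (Y ω, S ω))) :=
    HH_congr fun ω ω' => by
      simp only [Prod.mk.injEq, hZ]
      constructor
      · rintro ⟨e1, e2, e3⟩; rw [e1] at e2; exact ⟨e1, add_left_cancel e2, e3⟩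
      · rintro ⟨e1, e2, e3⟩; simp [e1, e2, e3]
  have m1 : HH Q (fun z => Z z.1) = HH P Z := HH_mp (cpl_sum hP Z) Z
  have m2 : HH Q (fun z => S z.1) = HH P S := HH_mp (cpl_sum hP Z) S
  -- main submodularity
  have s1 := submod iQ (XA := fun z => (X z.1, (X z.1 + Y z.2, S z.1)))
    (XB := fun z => (Y z.1, (X z.1 + Y z.2, S z.1)))
    (XC := fun z => ((X z.1, X z.2), Z z.1)) (XD := fun z => (X z.1 + Y z.2, S z.1))
    (by intro z z' _ _ e; exact (Prod.mk.inj e).2)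
    (by intro z z' _ _ e; exact (Prod.mk.inj e).2)
    (by intro z z' hz hz' e e'
        simp only [Prod.mk.injEq] at e e' ⊢
        refine ⟨⟨e.1, ?_⟩, (hZ _ _).2 ⟨by rw [e.1, e'.1], e.2.2⟩⟩
        have := e.2.1
        rw [sp2 z hz, sp2 z' hz', e'.1] at this
        exact add_right_cancel this)
  have b1 : HH Q (fun z => (X z.1, (X z.1 + Y z.2, S z.1))) ≤
      HH P (fun ω => (X ω, S ω)) + HH P (fun ω => (Y ω, S ω)) - HH P S := by
    have := submod iQ (XA := fun z => (X z.1, S z.1)) (XB := fun z => (Y z.2, S z.2))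
      (XC := fun z => (X z.1, (X z.1 + Y z.2, S z.1))) (XD := fun z => S z.1)
      (by intro z z' _ _ e; exact (Prod.mk.inj e).2)
      (by intro z z' h h' e; rw [(sp z h).2, (sp z' h').2]; exact (Prod.mk.inj e).2)
      (by intro z z' _ _ e e'; simp only [Prod.mk.injEq] at e e' ⊢; simp [e, e'])
    rw [m2, show HH Q (fun z => (X z.1, S z.1)) = _ from
      HH_mp (cpl_sum hP Z) (fun ω => (X ω, S ω)), show HH Q (fun z => (Y z.2, S z.2)) = _ from
      HH_mp (cpl_sum' hP Z) (fun ω => (Y ω, S ω))] at this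
    linarith
  have b2 : HH Q (fun z => (Y z.1, (X z.1 + Y z.2, S z.1))) ≤
      HH P (fun ω => (X ω, S ω)) + HH P (fun ω => (Y ω, S ω)) - HH P S := by
    have := submod iQ (XA := fun z => (Y z.1, S z.1)) (XB := fun z => (X z.2, S z.2))
      (XC := fun z => (Y z.1, (X z.1 + Y z.2, S z.1))) (XD := fun z => S z.1)
      (by intro z z' _ _ e; exact (Prod.mk.inj e).2)
      (by intro z z' h h' e; rw [(sp z h).2, (sp z' h').2]; exact (Prod.mk.inj e).2)
      (by intro z z' h h' e e'
          simp only [Prod.mk.injEq] at e e' ⊢; rw [sp2 z h, sp2 z' h']; simp [e, e'])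
    rw [m2, show HH Q (fun z => (Y z.1, S z.1)) = _ from
      HH_mp (cpl_sum hP Z) (fun ω => (Y ω, S ω)), show HH Q (fun z => (X z.2, S z.2)) = _ from
      HH_mp (cpl_sum' hP Z) (fun ω => (X ω, S ω))] at this
    linarith
  have b3 := cpl_HH hP Z X X
  have b4 : HH Q (fun z => (sm X X z, Z z.1)) = HH Q (fun z => (X z.1 + Y z.2, Z z.1)) := by
    have key : ∀ z, 0 < Q z → X z.1 + Y z.2 = sm X X z + (X z.1 + Y z.1) := by
      intro z hz
      rw [(sp z hz).1]; simp only [sm]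
      calc X z.1 + Y z.2 = X z.1 + Y z.2 + (X z.2 + X z.2) := by rw [h2, add_zero]
        _ = _ := by abel
    apply le_antisymm
    · refine HH_le iQ fun z z' hz hz' e => ?_
      simp only [Prod.mk.injEq] at e ⊢
      refine ⟨?_, e.2⟩
      have := e.1
      rw [key z hz, key z' hz', ((hZ _ _).1 e.2).1] at this
      exact add_right_cancel this
    · refine HH_le iQ fun z z' hz hz' e => ?_
      simp only [Prod.mk.injEq] at e ⊢
      refine ⟨?_, e.2⟩
      rw [key z hz, key z' hz', ((hZ _ _).1 e.2).1, e.1]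
  have b5 := submod iQ (XA := fun z => (X z.1 + Y z.2, S z.1)) (XB := fun z => Z z.1)
    (XC := fun z => (X z.1 + Y z.2, Z z.1)) (XD := fun z => S z.1)
    (by intro z z' _ _ e; exact (Prod.mk.inj e).2)
    (by intro z z' _ _ e; exact ((hZ _ _).1 e).2)
    (by intro z z' _ _ e e'; simp only [Prod.mk.injEq] at e ⊢; exact ⟨e.1, e'⟩)
  rw [e0]
  unfold HC at b3 ⊢
  rw [← hQ, m1, hXZ] at b3
  rw [b4, m1, hXZ]
  rw [m1, m2] at b5
  linarith

end fibring


section step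
variable {Ω Ω' Ω₁ Ω₂ Ω₃ Ω₄ : Type} [Fintype Ω] [Fintype Ω'] [Fintype Ω₁] [Fintype Ω₂] [Fintype Ω₃]
  [Fintype Ω₄] {A B C D : Type*} {G : Type} [AddCommGroup G]

lemma two_tor [Module (ZMod 2) G] (g : G) : g + g = 0 := by
  have : (2 : ZMod 2) • g = 0 := by
    rw [show (2 : ZMod 2) = 0 from rfl, zero_smul]
  rwa [two_smul] at this

lemma bsgF (h2 : ∀ g : G, g + g = 0) {a : Ω₁ → ℝ} {b : Ω₂ → ℝ} {c : Ω₃ → ℝ} {d : Ω₄ → ℝ}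
    (ha : IsP a) (hb : IsP b) (hc : IsP c)
    (hd : IsP d) (X₁ : Ω₁ → G) (X₂ : Ω₂ → G) (X₃ : Ω₃ → G) (X₄ : Ω₄ → G)
    (P : (Ω₁ × Ω₂) × (Ω₃ × Ω₄) → ℝ) (R : (Ω₁ × Ω₂) × (Ω₃ × Ω₄) → G)
    (Z : (Ω₁ × Ω₂) × (Ω₃ × Ω₄) → G × G) (hP : P = pm (pm a b) (pm c d))
    (hR : R = sm (fun z : Ω₁ × Ω₂ => X₁ z.1) (fun z : Ω₃ × Ω₄ => X₃ z.1))
    (hZ : Z = fun z => (sm X₁ X₂ z.1, sm X₃ X₄ z.2)) :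
    ∑ ω, P ω * (HH (pm (cd P Z ω) (cd P Z ω)) (sm R R) - HH (cd P Z ω) R) ≤
      2 * (HH (pm a c) (sm X₁ X₃) + HH (pm b d) (sm X₂ X₄) + HH (pm a d) (sm X₁ X₄)
        + HH (pm b c) (sm X₂ X₃) + HH (pm a b) (sm X₁ X₂) + HH (pm c d) (sm X₃ X₄))
      - 3 * HH (pm (pm a b) (pm c d)) (sm (sm X₁ X₂) (sm X₃ X₄))
      - 3 * (FJ a b c d X₁ X₂ X₃ X₄ + HH (pm a b) (sm X₁ X₂) + HH (pm c d) (sm X₃ X₄)) := by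
  subst hP
  have iP := isP_pm (isP_pm ha hb) (isP_pm hc hd)
  have key : ∀ z : (Ω₁ × Ω₂) × (Ω₃ × Ω₄), R z + (X₁ z.1.1 + X₄ z.2.2) = sm X₃ X₄ z.2 := by
    intro z
    rw [hR]; simp only [sm]
    calc _ = X₃ z.2.1 + X₄ z.2.2 + (X₁ z.1.1 + X₁ z.1.1) := by abel
      _ = _ := by rw [h2, add_zero]
  have hZ' : ∀ z z', Z z = Z z' ↔ (R z + (X₁ z.1.1 + X₄ z.2.2) = R z' + (X₁ z'.1.1 + X₄ z'.2.2) ∧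
      sm (sm X₁ X₂) (sm X₃ X₄) z = sm (sm X₁ X₂) (sm X₃ X₄) z') := by
    intro z z'
    rw [key, key, hZ]
    simp only [Prod.mk.injEq]
    rw [show sm (sm X₁ X₂) (sm X₃ X₄) z = sm X₁ X₂ z.1 + sm X₃ X₄ z.2 from rfl,
      show sm (sm X₁ X₂) (sm X₃ X₄) z' = sm X₁ X₂ z'.1 + sm X₃ X₄ z'.2 from rfl]
    constructor
    · rintro ⟨e1, e2⟩; rw [e1, e2]; simp
    · rintro ⟨e1, e2⟩; rw [e1] at e2; exact ⟨add_right_cancel e2, e1⟩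
  have := BSG iP R (fun z => X₁ z.1.1 + X₄ z.2.2) (sm (sm X₁ X₂) (sm X₃ X₄)) Z hZ' h2
  refine this.trans (le_of_eq ?_)
  have e1 : HH (pm (pm a b) (pm c d)) (fun ω => (R ω, sm (sm X₁ X₂) (sm X₃ X₄) ω)) =
      HH (pm a c) (sm X₁ X₃) + HH (pm b d) (sm X₂ X₄) := by
    rw [hR]; exact HH_US ha hb hc hd X₁ X₂ X₃ X₄
  have e2 := HH_WS ha hb hc hd X₁ X₂ X₃ X₄
  have e3 : HH (pm (pm a b) (pm c d)) Z = HH (pm a b) (sm X₁ X₂) + HH (pm c d) (sm X₃ X₄) := by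
    rw [hZ]; exact HH_prod (isP_pm ha hb) (isP_pm hc hd) _ _
  have e4 : HH (pm (pm a b) (pm c d)) (fun ω => (R ω, (X₁ ω.1.1 + X₄ ω.2.2,
      sm (sm X₁ X₂) (sm X₃ X₄) ω))) = FJ a b c d X₁ X₂ X₃ X₄ + HH (pm (pm a b) (pm c d)) Z := by
    have : FJ a b c d X₁ X₂ X₃ X₄ = HC (pm (pm a b) (pm c d)) R Z := by rw [hR, hZ]; rfl
    rw [this]; unfold HC; rw [sub_add_cancel]
    refine HH_congr fun z z' => ?_
    simp only [Prod.mk.injEq, hZ' z z']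
    constructor
    · rintro ⟨q1, q2, q3⟩; exact ⟨q1, by rw [q1, q2], q3⟩
    · rintro ⟨q1, q2, q3⟩; rw [q1] at q2; exact ⟨q1, add_left_cancel q2, q3⟩
  rw [e1, e2, e3, e4, e3]
  ring

lemma Red_mono [Finite G] [Module (ZMod 2) G] {l l' : ℝ} (h : l ≤ l') {P : Ω → ℝ} {X : Ω → G}
    (hr : Red l P X) : Red l' P X := fun V => by
  refine (hr V).trans (mul_le_mul_of_nonneg_right h (Real.log_nonneg ?_))
  exact_mod_cast Nat.one_le_iff_ne_zero.2 Nat.card_pos.ne'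

lemma step_num {η ε g t r t2 t4 f s : ℝ} (h0 : 0 < η) (hg : g = 1 - 2 * η) (hg0 : 0 < g)
    (hε : ε = η ^ 2 * g / 100) (ht : 0 < t) (hr : r = 2 * t - t2) (hr2 : 2 * (η - 6 * ε) * t ≤ r)
    (hs' : 2 * t2 - t4 ≤ (η + ε) * (2 * t2)) (hs'' : 2 * r - f ≤ (η + 2 * ε) * (2 * r))
    (ht2 : t ≤ t2) (ht4 : t2 ≤ t4) (hI : f + t4 ≤ 2 * t2)
    (hM : 2 * r - f ≤ ε * f + s / (1 - 2 * (η + ε))) (hsI : s ≤ 3 * (2 * t2 - t4 - f)) : False := by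
  have hη2 : η < 1 / 2 := by linarith
  have hg1 : g ≤ 1 := by linarith
  have hε0 : 0 < ε := by rw [hε]; positivity
  have hη3 : η ^ 2 ≤ 1 / 4 := by nlinarith
  have hε1 : ε ≤ g / 400 := by rw [hε]; nlinarith
  have hε2 : ε ≤ η ^ 2 / 100 := by rw [hε]; nlinarith
  have hI2 : 2 * t2 - t4 - f ≤ 32 * ε * t := by
    nlinarith [mul_nonneg hε0.le (ht.le.trans ht2)]
  have hs3 : 4 * η ^ 2 * t - 44 * ε * t ≤ 2 * r - f := by
    have a1 : 2 * r - 2 * (η + 2 * ε) * t2 ≤ 2 * r - f := by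
      nlinarith [mul_nonneg hε0.le (ht.le.trans ht2)]
    have a2 : (4 * (η - 6 * ε) * t) * (1 + η + 2 * ε) ≤ 2 * r * (1 + η + 2 * ε) :=
      mul_le_mul_of_nonneg_right (by linarith) (by linarith)
    have a3 : t2 = 2 * t - r := by linarith
    rw [a3] at a1
    have a4 : 0 ≤ t * ε * (1 / 2 - η) := by
      apply mul_nonneg (by positivity); linarith
    have a5 : 0 ≤ t * ε * (1 / 12 - ε) := by
      apply mul_nonneg (by positivity); linarith
    nlinarith
  have hd : g / 2 ≤ 1 - 2 * (η + ε) := by linarith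
  have hsd : s / (1 - 2 * (η + ε)) ≤ 192 * ε * t / g := by
    rw [div_le_div_iff₀ (by linarith) hg0]
    have : s ≤ 96 * ε * t := by linarith
    nlinarith [mul_pos hε0 ht]
  have e : 192 * ε * t / g = 1.92 * η ^ 2 * t := by rw [hε]; field_simp; ring
  rw [e] at hsd
  have hf : f ≤ 2 * t := by nlinarith
  nlinarith [mul_pos (pow_pos h0 2) ht, mul_le_mul_of_nonneg_right hε2 ht.le]

lemma step_num2 {η ε x y t t2 : ℝ} (h0 : 0 < η) (hη : η < 1 / 2) (hε0 : 0 < ε) (hε1 : ε ≤ 1 / 400)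
    (hε2 : ε ≤ η / 100) (tpos : 0 < t) (hcon : (η - 2 * ε) * (x + y) < x + y - t)
    (b1 : 2 * (1 - η - 2 * ε) * (x + y - t) ≤ 2 * t - t2) :
    2 * (η - 6 * ε) * t ≤ 2 * t - t2 := by
  obtain ⟨s, hs⟩ : ∃ s, s = x + y - t := ⟨_, rfl⟩
  have e : x + y = s + t := by linarith
  rw [e] at hcon b1
  have this : (η - 2 * ε) * t ≤ (1 - η + 2 * ε) * s := by linarith
  have b1 : 2 * (1 - η - 2 * ε) * s ≤ 2 * t - t2 := by linarith
  have b2 : (1 - η + 2 * ε) * (1 - 8 * ε) ≤ 1 - η - 2 * ε := by nlinarith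
  have b3 : 0 ≤ s := by
    have : 0 ≤ (1 - η + 2 * ε) * s := le_trans (mul_nonneg (by linarith) tpos.le) this
    exact nonneg_of_mul_nonneg_right this (by linarith)
  have b4 : (1 - 8 * ε) * ((η - 2 * ε) * t) ≤ (1 - 8 * ε) * ((1 - η + 2 * ε) * s) :=
    mul_le_mul_of_nonneg_left this (by linarith)
  have b5 := mul_le_mul_of_nonneg_right b2 b3
  have b6 : 0 ≤ t * ε * (1 / 2 - η) := by
    apply mul_nonneg (by positivity); linarith
  have b7 : 0 ≤ t * ε * ε := by positivity
  linarith

lemma step_core [Finite G] [Module (ZMod 2) G] {η ε l : ℝ} (h0 : 0 < η) (hη : η < 1 / 2)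
    (hε : ε = η ^ 2 * (1 - 2 * η) / 100) (hl : 0 < l) (hg : GoodAt (η + ε) l)
    {μ : Ω → ℝ} {ν : Ω' → ℝ} (h : IsP μ) (h' : IsP ν) (X : Ω → G) (Y : Ω' → G)
    (rX : Red (ε * l) μ X) (rT : Red (ε * l) (pm μ ν) (sm X Y))
    (rTT : Red (ε * l) (pm (pm μ ν) (pm μ ν)) (sm (sm X Y) (sm X Y))) :
    HH μ X + HH ν Y - HH (pm μ ν) (sm X Y) ≤ (η - 2 * ε) * (HH μ X + HH ν Y) := by
  by_contra hcon
  push Not at hcon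
  have hg0 : 0 < 1 - 2 * η := by linarith
  have hε0 : 0 < ε := by rw [hε]; positivity
  have hη3 : η ^ 2 ≤ 1 / 4 := by nlinarith
  have hε1 : ε ≤ 1 / 400 := by rw [hε]; nlinarith
  have hε2 : ε ≤ η / 100 := by rw [hε]; nlinarith
  have h2 : ∀ g : G, g + g = 0 := two_tor
  have iT := isP_pm h h'
  -- the T-trick
  have f1 := fib h h' h' h X Y Y X
  have f2 := lemC (by linarith) hl hε0.le hg iT (isP_pm h' h) (fun z : Ω × Ω' => X z.1) (sm X Y)
    (fun z : Ω' × Ω => Y z.1) (sm Y X) ((Red_mp (MP_fst h')).2 rX)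
  change _ - FJ μ ν ν μ X Y Y X ≤ _ at f2
  rw [HC_self_sum h h', HC_self_sum h' h] at f2
  have f3 : HH (pm (pm μ ν) (pm ν μ)) (sm (sm X Y) (sm Y X)) =
      HH (pm (pm μ ν) (pm μ ν)) (sm (sm X Y) (sm X Y)) := by
    rw [← HH_mp (MP_prod (MP_id (pm μ ν)) (MP_swap ν μ))]
    congr 1; funext z; simp only [sm, Prod.swap]; abel
  rw [f3] at f1
  rw [HH_sm_comm ν μ Y X] at f1 f2
  have u1 := HH_sm_left h h' X Y
  have u2 := HH_sm_right h h' X Y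
  have u3 := HH_nonneg h X
  have u4 := HH_nonneg h' Y
  set T := sm X Y with hT
  set τ := pm μ ν with hτ
  set t := HH τ T with ht
  set x := HH μ X
  set y := HH ν Y
  have tpos : 0 < t := by
    rcases (HH_nonneg iT T).eq_or_lt with e | e
    · exfalso
      have e' : t = 0 := e.symm
      have : x = 0 := by linarith
      have : y = 0 := by linarith
      nlinarith
    · exact e
  have iTT := isP_pm iT iT
  -- iid part
  have g1 := hg G _ _ (pm τ τ) (pm τ τ) (sm T T) (sm T T) iTT iTT
    (Red_mono (by nlinarith) rTT)
  have g2 := lemC (by linarith) hl hε0.le hg iTT iTT (fun z => T z.1) (sm T T)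
    (fun z => T z.1) (sm T T) ((Red_mp (MP_fst iT)).2 rT)
  change _ - FJ τ τ τ τ T T T T ≤ _ at g2
  rw [HC_self_sum iT iT] at g2
  have g3 := fib iT iT iT iT T T T T
  have g4 := KVc iTT iTT iTT (fun z => T z.1) (fun z => T z.1) (fun z => T z.1) (sm T T) (sm T T)
    (sm T T)
  have g5 := lemM' (by nlinarith) hl hε0.le hg iTT (isP_pm iTT iTT) (fun z => T z.1) (sm T T)
    (sm (fun z => T z.1) (fun z => T z.1)) (fun z => (sm T T z.1, sm T T z.2))
    ((Red_mp (MP_fst iT)).2 rT)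
  have g6 := bsgF h2 iT iT iT iT T T T T (pm (pm τ τ) (pm τ τ))
    (sm (fun z => T z.1) (fun z => T z.1)) (fun z => (sm T T z.1, sm T T z.2)) rfl rfl rfl
  have hfj : HC (pm (pm τ τ) (pm τ τ)) (sm (fun z => T z.1) (fun z => T z.1))
    (fun z => (sm T T z.1, sm T T z.2)) = FJ τ τ τ τ T T T T := rfl
  have hh := HC_self_sum iT iT T T
  have hp1 : HH (pm (pm τ τ) (pm τ τ)) (fun z => (sm T T z.1, sm T T z.2)) =
    HH (pm τ τ) (sm T T) + HH (pm τ τ) (sm T T) := HH_prod iTT iTT _ _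
  have hp2 : HH (pm (pm τ τ) (pm (pm τ τ) (pm τ τ))) (fun z => (sm T T z.1,
      (sm T T z.2.1, sm T T z.2.2))) =
    HH (pm τ τ) (sm T T) + (HH (pm τ τ) (sm T T) + HH (pm τ τ) (sm T T)) := by
    rw [← hp1]; exact HH_prod iTT (isP_pm iTT iTT) _ (fun z => (sm T T z.1, sm T T z.2))
  set S := ∑ ω, pm (pm τ τ) (pm τ τ) ω * (HH (pm (cd (pm (pm τ τ) (pm τ τ))
    (fun z => (sm T T z.1, sm T T z.2)) ω) (cd (pm (pm τ τ) (pm τ τ))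
    (fun z => (sm T T z.1, sm T T z.2)) ω)) (sm (sm (fun z => T z.1) (fun z => T z.1))
      (sm (fun z => T z.1) (fun z => T z.1))) - HH (cd (pm (pm τ τ) (pm τ τ))
    (fun z => (sm T T z.1, sm T T z.2)) ω) (sm (fun z => T z.1) (fun z => T z.1))) with hS
  set f := FJ τ τ τ τ T T T T with hf
  have v1 := HH_sm_left iT iT T T
  have v2 := HH_sm_left iTT iTT (sm T T) (sm T T)
  rw [← ht] at *
  unfold HC at g5 hh hfj
  rw [hp1] at hfj
  set t2 := HH (pm τ τ) (sm T T)
  set t4 := HH (pm (pm τ τ) (pm τ τ)) (sm (sm T T) (sm T T))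
  refine step_num (η := η) (ε := ε) (t := t) (r := 2 * t - t2) (t2 := t2) (t4 := t4) (f := f)
    (s := S) h0 rfl hg0 hε tpos rfl ?_ ?_ ?_ v1 v2 ?_ ?_ ?_
  · exact step_num2 h0 hη hε0 hε1 hε2 tpos hcon (by linarith)
  · clear_value S t2 t4 f; linarith
  · clear_value S t2 t4 f; linarith
  · clear_value S t2 t4 f; linarith
  · rw [hp2, hp1] at g5
    beta_reduce at g4 g5 hh hfj
    rw [hfj] at g5
    linarith
  · clear_value S t2 t4 f; linarith

lemma step_lemma {η ε l : ℝ} (h0 : 0 < η) (hη : η < 1 / 2)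
    (hε : ε = η ^ 2 * (1 - 2 * η) / 100) (hl : 0 < l) (hg : GoodAt (η + ε) l) :
    GoodAt (η - ε) (ε * (ε * l) / 4) := by
  intro G Ω Ω' _ _ _ _ _ μ ν X Y h h' hr
  have hg0 : 0 < 1 - 2 * η := by linarith
  have hε0 : 0 < ε := by rw [hε]; positivity
  have hη3 : η ^ 2 ≤ 1 / 4 := by nlinarith
  have hε2 : ε ≤ η / 100 := by rw [hε]; nlinarith
  have iT := isP_pm h h'
  have iTT := isP_pm iT iT
  obtain ⟨V, hV, hV'⟩ := exists_red (ι := Fin 4) iTT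
    ![fun z => X z.1.1, fun z => Y z.1.2, fun z => sm X Y z.1, sm (sm X Y) (sm X Y)] (ε * l)
  simp only [Fin.sum_univ_four] at hV
  have m1 : MP (fun z : (Ω × Ω') × (Ω × Ω') => z.1.1) (pm (pm μ ν) (pm μ ν)) μ :=
    (MP_fst h').comp (MP_fst iT)
  have m2 : MP (fun z : (Ω × Ω') × (Ω × Ω') => z.1.2) (pm (pm μ ν) (pm μ ν)) ν :=
    (MP_snd h).comp (MP_fst iT)
  have m3 : MP (fun z : (Ω × Ω') × (Ω × Ω') => z.1) (pm (pm μ ν) (pm μ ν)) (pm μ ν) := MP_fst iT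
  have r1 : Red (ε * l) μ (fun ω => V.mkQ (X ω)) := (Red_mp m1).1 (hV' 0)
  have r3 : Red (ε * l) (pm μ ν) (sm (fun ω => V.mkQ (X ω)) (fun ω => V.mkQ (Y ω))) := by
    have := (Red_mp (X := fun z => V.mkQ (sm X Y z)) m3).1 (hV' 2)
    simp only [sm, map_add] at this
    exact this
  have r4 : Red (ε * l) (pm (pm μ ν) (pm μ ν)) (sm (sm (fun ω => V.mkQ (X ω))
      (fun ω => V.mkQ (Y ω))) (sm (fun ω => V.mkQ (X ω)) (fun ω => V.mkQ (Y ω)))) := by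
    have := hV' 3
    change Red _ _ (fun z => V.mkQ (sm (sm X Y) (sm X Y) z)) at this
    simp only [sm, map_add] at this
    exact this
  have : Finite (G ⧸ V) := Finite.of_surjective _ (Submodule.mkQ_surjective V)
  have c := step_core h0 hη hε hl hg h h' _ _ r1 r3 r4
  have k := lemK0 h h' X Y V
  have q := hr V
  have e1 : HH (pm (pm μ ν) (pm μ ν)) (fun z => X z.1.1) = HH μ X := HH_mp m1 X
  have e2 : HH (pm (pm μ ν) (pm μ ν)) (fun z => Y z.1.2) = HH ν Y := HH_mp m2 Y
  have e3 : HH (pm (pm μ ν) (pm μ ν)) (fun z => sm X Y z.1) = HH (pm μ ν) (sm X Y) :=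
    HH_mp m3 (sm X Y)
  have e4 := HH_sm_le iT iT (sm X Y) (sm X Y)
  have e5 := HH_sm_le h h' X Y
  have n := fun i => HH_nonneg iTT (fun ω => V.mkQ ((![fun z => X z.1.1, fun z => Y z.1.2,
    fun z => sm X Y z.1, sm (sm X Y) (sm X Y)] : Fin 4 → (Ω × Ω') × (Ω × Ω') → G) i ω))
  have n0 := n 0
  have n1 := n 1
  have n2 := n 2
  have n3 := n 3
  have hV2 : ε * l * Real.log (Nat.card V) ≤ 4 * (HH μ X + HH ν Y) := by
    have : ε * l * Real.log (Nat.card V) ≤ HH (pm (pm μ ν) (pm μ ν)) (fun z => X z.1.1)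
      + HH (pm (pm μ ν) (pm μ ν)) (fun z => Y z.1.2)
      + HH (pm (pm μ ν) (pm μ ν)) (fun z => sm X Y z.1)
      + HH (pm (pm μ ν) (pm μ ν)) (sm (sm X Y) (sm X Y)) := by
      refine hV.trans ?_
      change HH (pm (pm μ ν) (pm μ ν)) (fun z => X z.1.1)
        + HH (pm (pm μ ν) (pm μ ν)) (fun z => Y z.1.2)
        + HH (pm (pm μ ν) (pm μ ν)) (fun z => sm X Y z.1)
        + HH (pm (pm μ ν) (pm μ ν)) (sm (sm X Y) (sm X Y)) - _ ≤ _
      linarith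
    linarith
  have p1 : HH μ (fun ω => V.mkQ (X ω)) ≤ HH μ X := HH_le h (by intro _ _ _ _ e; simp [e])
  have p2 : HH ν (fun ω => V.mkQ (Y ω)) ≤ HH ν Y := HH_le h' (by intro _ _ _ _ e; simp [e])
  have q2 : ε * (ε * l) / 4 * Real.log (Nat.card V) ≤ ε * (HH μ X + HH ν Y) := by
    have := mul_le_mul_of_nonneg_left hV2 hε0.le
    linarith
  have q3 : (η - 2 * ε) * (HH μ (fun ω => V.mkQ (X ω)) + HH ν (fun ω => V.mkQ (Y ω))) ≤
    (η - 2 * ε) * (HH μ X + HH ν Y) := mul_le_mul_of_nonneg_left (by linarith) (by linarith)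
  linarith

end step


section base
variable {Ω Ω' Ω₀ Ω₁ Ω₂ Ω₃ Ω₄ : Type} [Fintype Ω] [Fintype Ω'] [Fintype Ω₀] [Fintype Ω₁] [Fintype Ω₂]
  [Fintype Ω₃] [Fintype Ω₄] {A B C D : Type*} {G : Type} [AddCommGroup G]

/-- entropic Ruzsa distance (sum version) -/
def dd (P : Ω → ℝ) (X : Ω → G) (Q : Ω' → ℝ) (Y : Ω' → G) : ℝ :=
  HH (pm P Q) (sm X Y) - HH P X / 2 - HH Q Y / 2

lemma dd_nonneg {P : Ω → ℝ} {Q : Ω' → ℝ} (h : IsP P) (h' : IsP Q) (X : Ω → G) (Y : Ω' → G) :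
    0 ≤ dd P X Q Y := by
  have := HH_sm_left h h' X Y
  have := HH_sm_right h h' X Y
  unfold dd; linarith

/-- `K` is a lower bound of the functional -/
def LB (G : Type) [AddCommGroup G] (η K : ℝ) (μ : Ω₀ → ℝ) (X₀ : Ω₀ → G) : Prop :=
  ∀ (Ω Ω' : Type) [Fintype Ω] [Fintype Ω'] (P : Ω → ℝ) (Q : Ω' → ℝ) (X : Ω → G) (Y : Ω' → G),
    IsP P → IsP Q → K ≤ dd P X Q Y + η * (dd μ X₀ P X + dd μ X₀ Q Y)

lemma cd_pm {μ : Ω → ℝ} {ν : Ω' → ℝ} (U : Ω → A) (W : Ω' → B) (z : Ω × Ω') :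
    cd (pm μ ν) (fun z => (U z.1, W z.2)) z = pm (cd μ U z.1) (cd ν W z.2) := by
  classical
  funext z'
  unfold cd
  rw [pr_pm]
  unfold pm
  by_cases hu : U z'.1 = U z.1
  · by_cases hw : W z'.2 = W z.2
    · simp only [hu, hw, if_true]; exact mul_div_mul_comm _ _ _ _
    · simp [hu, hw]
  · simp [hu]

lemma sum_pm (μ : Ω → ℝ) (ν : Ω' → ℝ) (f : Ω × Ω' → ℝ) :
    ∑ z, pm μ ν z * f z = ∑ x, μ x * ∑ y, ν y * f (x, y) := by
  simp only [pm, Fintype.sum_prod_type, Finset.mul_sum, mul_assoc]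

lemma MinC {η K : ℝ} (hη : 0 ≤ η) {μ : Ω₀ → ℝ} (hμ : IsP μ) {X₀ : Ω₀ → G} (hK : LB G η K μ X₀)
    {P : Ω → ℝ} {Q : Ω' → ℝ} (h : IsP P) (h' : IsP Q) (X : Ω → G) (U : Ω → A) (Y : Ω' → G)
    (W : Ω' → B) :
    K ≤ HC (pm P Q) (sm X Y) (fun z => (U z.1, W z.2)) - HC P X U / 2 - HC Q Y W / 2 +
      η * ((HH (pm μ P) (sm X₀ X) - HH μ X₀ / 2 - HC P X U / 2) +
        (HH (pm μ Q) (sm X₀ Y) - HH μ X₀ / 2 - HC Q Y W / 2)) := by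
  have k : ∑ z, pm P Q z * K ≤ ∑ z, pm P Q z * (dd (cd P U z.1) X (cd Q W z.2) Y +
      η * (dd μ X₀ (cd P U z.1) X + dd μ X₀ (cd Q W z.2) Y)) := by
    refine Finset.sum_le_sum fun z _ => ?_
    rcases (h.1 z.1).eq_or_lt with h0 | h0
    · simp [pm, ← h0]
    rcases (h'.1 z.2).eq_or_lt with h0' | h0'
    · simp [pm, ← h0']
    exact mul_le_mul_of_nonneg_left (hK _ _ _ _ _ _ (isP_cd h U h0) (isP_cd h' W h0'))
      (mul_pos h0 h0').le
  rw [← Finset.sum_mul, (isP_pm h h').2, one_mul] at k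
  have e1 : ∑ z, pm P Q z * HH (pm (cd P U z.1) (cd Q W z.2)) (sm X Y) =
      HC (pm P Q) (sm X Y) (fun z => (U z.1, W z.2)) := by
    rw [HC_eq (isP_pm h h')]; simp only [cd_pm]
  have e2 : ∑ z, pm P Q z * HH (cd P U z.1) X = HC P X U := by
    rw [HC_eq h]; exact MP_fst h' (fun ω => HH (cd P U ω) X)
  have e3 : ∑ z, pm P Q z * HH (cd Q W z.2) Y = HC Q Y W := by
    rw [HC_eq h']; exact MP_snd h (fun ω => HH (cd Q W ω) Y)
  have e4 : ∑ z, pm P Q z * HH (pm μ (cd P U z.1)) (sm X₀ X) ≤ HH (pm μ P) (sm X₀ X) := by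
    refine le_trans (le_of_eq ?_) (HC_le (isP_pm hμ h) (sm X₀ X) (fun z => U z.2))
    rw [HC_pm_snd hμ h]; exact MP_fst h' (fun ω => HH (pm μ (cd P U ω)) (sm X₀ X))
  have e5 : ∑ z, pm P Q z * HH (pm μ (cd Q W z.2)) (sm X₀ Y) ≤ HH (pm μ Q) (sm X₀ Y) := by
    refine le_trans (le_of_eq ?_) (HC_le (isP_pm hμ h') (sm X₀ Y) (fun z => W z.2))
    rw [HC_pm_snd hμ h']; exact MP_snd h (fun ω => HH (pm μ (cd Q W ω)) (sm X₀ Y))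
  have e6 : ∑ z, pm P Q z * (HH μ X₀) = HH μ X₀ := by
    rw [← Finset.sum_mul, (isP_pm h h').2, one_mul]
  have e7 : ∀ z, pm P Q z * (dd (cd P U z.1) X (cd Q W z.2) Y +
      η * (dd μ X₀ (cd P U z.1) X + dd μ X₀ (cd Q W z.2) Y)) =
      pm P Q z * HH (pm (cd P U z.1) (cd Q W z.2)) (sm X Y)
      - (pm P Q z * HH (cd P U z.1) X) * ((1 + η) / 2)
      - (pm P Q z * HH (cd Q W z.2) Y) * ((1 + η) / 2)
      + (pm P Q z * HH (pm μ (cd P U z.1)) (sm X₀ X)) * η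
      + (pm P Q z * HH (pm μ (cd Q W z.2)) (sm X₀ Y)) * η
      - (pm P Q z * (HH μ X₀)) * η := by intro z; unfold dd; ring
  simp only [e7, Finset.sum_sub_distrib, Finset.sum_add_distrib, ← Finset.sum_mul] at k
  simp only [← Finset.sum_mul] at e6
  rw [e1, e2, e3, e6] at k
  nlinarith [mul_le_mul_of_nonneg_left e4 hη, mul_le_mul_of_nonneg_left e5 hη]

lemma MinR {η K : ℝ} (hη : 0 ≤ η) {μ : Ω₀ → ℝ} (hμ : IsP μ) {X₀ : Ω₀ → G} (hK : LB G η K μ X₀)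
    {P : Ω → ℝ} (h : IsP P) (X : Ω → G) (U : Ω → A) :
    K ≤ ∑ ω, P ω * (HH (pm (cd P U ω) (cd P U ω)) (sm X X) - HH (cd P U ω) X) +
      2 * η * (HH (pm μ P) (sm X₀ X) - HH μ X₀ / 2 - HC P X U / 2) := by
  have k : ∑ z, P z * K ≤ ∑ z, P z * (dd (cd P U z) X (cd P U z) X +
      η * (dd μ X₀ (cd P U z) X + dd μ X₀ (cd P U z) X)) := by
    refine Finset.sum_le_sum fun z _ => ?_
    rcases (h.1 z).eq_or_lt with h0 | h0
    · simp [← h0]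
    exact mul_le_mul_of_nonneg_left (hK _ _ _ _ _ _ (isP_cd h U h0) (isP_cd h U h0)) h0.le
  rw [← Finset.sum_mul, h.2, one_mul] at k
  have e2 : ∑ z, P z * HH (cd P U z) X = HC P X U := by
    rw [HC_eq h]
  have e4 : ∑ z, P z * HH (pm μ (cd P U z)) (sm X₀ X) ≤ HH (pm μ P) (sm X₀ X) := by
    refine le_trans (le_of_eq ?_) (HC_le (isP_pm hμ h) (sm X₀ X) (fun z => U z.2))
    rw [HC_pm_snd hμ h]
  have e6 : ∑ z, P z * (HH μ X₀) = HH μ X₀ := by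
    rw [← Finset.sum_mul, h.2, one_mul]
  have e7 : ∀ z, P z * (dd (cd P U z) X (cd P U z) X +
      η * (dd μ X₀ (cd P U z) X + dd μ X₀ (cd P U z) X)) =
      P z * (HH (pm (cd P U z) (cd P U z)) (sm X X) - HH (cd P U z) X)
      - (P z * HH (cd P U z) X) * η
      + (P z * HH (pm μ (cd P U z)) (sm X₀ X)) * (2 * η)
      - (P z * (HH μ X₀)) * η := by intro z; unfold dd; ring
  simp only [e7, Finset.sum_sub_distrib, Finset.sum_add_distrib, ← Finset.sum_mul] at k
  simp only [← Finset.sum_mul] at e6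
  rw [e2, e6] at k
  nlinarith [mul_le_mul_of_nonneg_left e4 hη]

lemma FJ_perm {a : Ω₁ → ℝ} {b : Ω₂ → ℝ} {c : Ω₃ → ℝ} {d : Ω₄ → ℝ} (ha : IsP a) (hb : IsP b)
    (hc : IsP c) (hd : IsP d) (X₁ : Ω₁ → G) (X₂ : Ω₂ → G) (X₃ : Ω₃ → G) (X₄ : Ω₄ → G)
    (h2 : ∀ g : G, g + g = 0) :
    FJ a b c d X₁ X₂ X₃ X₄ + HH (pm a b) (sm X₁ X₂) + HH (pm c d) (sm X₃ X₄) =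
    FJ a c d b X₁ X₃ X₄ X₂ + HH (pm a c) (sm X₁ X₃) + HH (pm d b) (sm X₄ X₂) := by
  unfold FJ HC
  rw [HH_prod (isP_pm ha hb) (isP_pm hc hd), HH_prod (isP_pm ha hc) (isP_pm hd hb)]
  have m := (MP_prod (MP_id (pm a c)) (MP_swap b d)).comp (MP_mid a b c d)
  have := HH_mp m (fun z => (sm (fun z : Ω₁ × Ω₃ => X₁ z.1) (fun z : Ω₄ × Ω₂ => X₄ z.1) z,
    (sm X₁ X₃ z.1, sm X₄ X₂ z.2)))
  have e : HH (pm (pm a b) (pm c d)) (fun ω => (sm (fun z : Ω₁ × Ω₂ => X₁ z.1)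
      (fun z : Ω₃ × Ω₄ => X₃ z.1) ω, (sm X₁ X₂ ω.1, sm X₃ X₄ ω.2))) =
      HH (pm (pm a c) (pm d b)) (fun z => (sm (fun z : Ω₁ × Ω₃ => X₁ z.1) (fun z : Ω₄ × Ω₂ => X₄ z.1) z,
        (sm X₁ X₃ z.1, sm X₄ X₂ z.2))) := by
    refine Eq.trans (HH_congr fun z z' => ?_) this
    simp only [sm, Prod.mk.injEq, Prod.swap]
    have k1 : ∀ z : (Ω₁ × Ω₂) × (Ω₃ × Ω₄), X₁ z.1.1 + X₄ z.2.2 =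
        (X₁ z.1.1 + X₃ z.2.1) + (X₃ z.2.1 + X₄ z.2.2) := fun z => by
      rw [show (X₁ z.1.1 + X₃ z.2.1) + (X₃ z.2.1 + X₄ z.2.2) =
        X₁ z.1.1 + X₄ z.2.2 + (X₃ z.2.1 + X₃ z.2.1) by abel, h2, add_zero]
    have k2 : ∀ z : (Ω₁ × Ω₂) × (Ω₃ × Ω₄), X₄ z.2.2 + X₂ z.1.2 =
        (X₁ z.1.1 + X₄ z.2.2) + (X₁ z.1.1 + X₂ z.1.2) := fun z => by
      rw [show (X₁ z.1.1 + X₄ z.2.2) + (X₁ z.1.1 + X₂ z.1.2) =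
        X₄ z.2.2 + X₂ z.1.2 + (X₁ z.1.1 + X₁ z.1.1) by abel, h2, add_zero]
    rw [k2 z, k2 z', k1 z, k1 z']
    constructor
    · rintro ⟨e1, e2, e3⟩; rw [e1, e2, e3]; simp
    · rintro ⟨e1, e2, e3⟩
      rw [e2] at e1
      have e4 := add_left_cancel e1
      rw [e2, e4] at e3
      exact ⟨e2, add_left_cancel e3, e4⟩
  rw [e]; ring

lemma sum_xx {P : Ω → ℝ} {Q : Ω' → ℝ} (h : IsP P) (h' : IsP Q) (X : Ω → G) (Y : Ω' → G) :
    HH (pm P P) (sm X X) + HH Q Y ≤ 2 * HH (pm P Q) (sm X Y) := by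
  have v5 := KV h h' h X Y X
  have c1 := HH_sm_comm Q P Y X
  have v7 := HH_sm_right h' (isP_pm h h) Y (sm X X)
  have m := (MP_assoc P Q P).comp ((MP_prod (MP_swap Q P) (MP_id P)).comp (MP_assoc' Q P P))
  have e := HH_mp m (sm X (sm Y X))
  have e' : HH (pm Q (pm P P)) (sm Y (sm X X)) = HH (pm P (pm Q P)) (sm X (sm Y X)) := by
    rw [← e]; congr 1; funext z; simp only [sm, Prod.swap, id]; abel
  linarith

lemma sum_sigma {P : Ω → ℝ} {Q : Ω' → ℝ} (h : IsP P) (h' : IsP Q) (X : Ω → G) (Y : Ω' → G) :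
    HH (pm (pm P Q) (pm Q P)) (sm (sm X Y) (sm Y X)) + HH P X + HH Q Y
      ≤ 3 * HH (pm P Q) (sm X Y) := by
  have v1 := KV (isP_pm h h') h' h (sm X Y) Y X
  have c1 := HH_sm_comm Q P Y X
  have v2 := KV h' h h' Y X Y
  have c2 := HH_sm_comm Q (pm P Q) Y (sm X Y)
  linarith

/-- At a minimiser the distance vanishes. -/
lemma dd_min_zero {μ : Ω₀ → ℝ} (hμ : IsP μ) {X₀ : Ω₀ → G} (h2 : ∀ g : G, g + g = 0)
    {P : Ω → ℝ} {Q : Ω' → ℝ} (h : IsP P) (h' : IsP Q) (X : Ω → G) (Y : Ω' → G)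
    (hK : LB G (1/20) (dd P X Q Y + 1/20 * (dd μ X₀ P X + dd μ X₀ Q Y)) μ X₀) :
    dd P X Q Y = 0 := by
  have hη : (0:ℝ) ≤ 1/20 := by norm_num
  have pp := isP_pm h h
  have qq := isP_pm h' h'
  have pq := isP_pm h h'
  have qp := isP_pm h' h
  -- fibring a
  have a1 := hK _ _ _ _ (sm X X) (sm Y Y) pp qq
  have a2 := MinC hη hμ hK pp qq (fun z => X z.1) (sm X X) (fun z => Y z.1) (sm Y Y)
  change _ ≤ FJ P P Q Q X X Y Y - _ - _ + _ at a2
  rw [HC_self_sum h h, HC_self_sum h' h'] at a2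
  have t1 : HH (pm μ (pm P P)) (sm X₀ (fun z => X z.1)) = HH (pm μ P) (sm X₀ X) :=
    HH_mp (MP_prod (MP_id μ) (MP_fst h)) (sm X₀ X)
  have t2 : HH (pm μ (pm Q Q)) (sm X₀ (fun z => Y z.1)) = HH (pm μ Q) (sm X₀ Y) :=
    HH_mp (MP_prod (MP_id μ) (MP_fst h')) (sm X₀ Y)
  rw [t1, t2] at a2
  -- fibring b
  have b1 := hK _ _ _ _ (sm X Y) (sm Y X) pq qp
  have b2 := MinC hη hμ hK pq qp (fun z => X z.1) (sm X Y) (fun z => Y z.1) (sm Y X)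
  change _ ≤ FJ P Q Q P X Y Y X - _ - _ + _ at b2
  rw [HC_self_sum h h', HC_self_sum h' h] at b2
  have t3 : HH (pm μ (pm P Q)) (sm X₀ (fun z => X z.1)) = HH (pm μ P) (sm X₀ X) :=
    HH_mp (MP_prod (MP_id μ) (MP_fst h')) (sm X₀ X)
  have t4 : HH (pm μ (pm Q P)) (sm X₀ (fun z => Y z.1)) = HH (pm μ Q) (sm X₀ Y) :=
    HH_mp (MP_prod (MP_id μ) (MP_fst h)) (sm X₀ Y)
  rw [t3, t4] at b2
  have pe := FJ_perm h h h' h' X X Y Y h2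
  have bs := bsgF h2 h h h' h' X X Y Y _ _ _ rfl rfl rfl
  have r := MinR hη hμ hK (isP_pm pp qq)
    (sm (fun z : Ω × Ω => X z.1) (fun z : Ω' × Ω' => Y z.1)) (fun z => (sm X X z.1, sm Y Y z.2))
  have hf : HC (pm (pm P P) (pm Q Q)) (sm (fun z : Ω × Ω => X z.1) (fun z : Ω' × Ω' => Y z.1))
    (fun z => (sm X X z.1, sm Y Y z.2)) = FJ P P Q Q X X Y Y := rfl
  rw [hf] at r
  have t5 : HH (pm μ (pm (pm P P) (pm Q Q))) (sm X₀ (sm (fun z : Ω × Ω => X z.1)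
      (fun z : Ω' × Ω' => Y z.1))) = HH (pm μ (pm P Q)) (sm X₀ (sm X Y)) :=
    HH_mp (MP_prod (MP_id μ) (MP_prod (MP_fst h) (MP_fst h'))) (sm X₀ (sm X Y))
  rw [t5] at r
  -- Kaimanovich-Vershik
  have v1 := KV hμ h h X₀ X X
  have v2 := KV hμ h' h' X₀ Y Y
  have v3 := KV hμ h h' X₀ X Y
  have v4 := KV hμ h' h X₀ Y X
  have c1 := HH_sm_comm Q P Y X
  have t6 : HH (pm μ (pm Q P)) (sm X₀ (sm Y X)) = HH (pm μ (pm P Q)) (sm X₀ (sm X Y)) := by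
    rw [← HH_mp (MP_prod (MP_id μ) (MP_swap Q P))]
    congr 1; funext z; simp only [sm, Prod.swap]; abel
  have v7 := sum_xx h h' X Y
  have v8 := sum_xx h' h Y X
  have v9 := sum_sigma h h' X Y
  have fa := fib h h h' h' X X Y Y
  have fb := fib h h' h' h X Y Y X
  have ss : HH (pm (pm P Q) (pm Q P)) (sm (sm X Y) (sm Y X)) =
      HH (pm (pm P P) (pm Q Q)) (sm (sm X X) (sm Y Y)) := by
    refine Eq.trans ?_ (HH_SS (a := P) (b := Q) (c := P) (d := Q) X Y X Y)
    rw [← HH_mp (MP_prod (MP_id (pm P Q)) (MP_swap Q P))]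
    congr 1; funext z; simp only [sm, Prod.swap]; abel
  have nn := dd_nonneg h h' X Y
  unfold dd at *
  rw [ss] at b1 v9 fb
  rw [t6] at v4 b1
  rw [c1] at b1 b2 pe v4 v8 fb
  generalize HH (pm P Q) (sm X Y) = c at *
  generalize HH (pm P P) (sm X X) = xx at *
  generalize HH (pm Q Q) (sm Y Y) = yy at *
  generalize HH P X = a at *
  generalize HH Q Y = b at *
  generalize HH μ X₀ = m at *
  generalize HH (pm μ (pm P Q)) (sm X₀ (sm X Y)) = u1 at *
  generalize HH (pm μ (pm P P)) (sm X₀ (sm X X)) = u2 at *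
  generalize HH (pm μ (pm Q Q)) (sm X₀ (sm Y Y)) = u3 at *
  generalize HH (pm μ P) (sm X₀ X) = w1 at *
  generalize HH (pm μ Q) (sm X₀ Y) = w2 at *
  generalize HH (pm (pm P P) (pm Q Q)) (sm (sm X X) (sm Y Y)) = σ at *
  generalize FJ P P Q Q X X Y Y = Fa at *
  generalize FJ P Q Q P X Y Y X = Fb at *
  have r' := r.trans (add_le_add_left bs _)
  clear r bs hK hf
  linarith

end base


section base2
variable {Ω Ω' Ω₀ : Type} [Fintype Ω] [Fintype Ω'] [Fintype Ω₀] {G : Type}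

open Classical in
/-- the law of a random variable -/
def law (P : Ω → ℝ) (X : Ω → G) : G → ℝ := fun g => ∑ ω, if X ω = g then P ω else 0

lemma MP_law [Fintype G] (P : Ω → ℝ) (X : Ω → G) : MP X P (law P X) := fun f => by
  classical
  unfold law
  simp only [Finset.sum_mul]
  rw [Finset.sum_comm]
  refine Finset.sum_congr rfl fun ω _ => ?_
  simp [ite_mul]

lemma isP_law [Fintype G] {P : Ω → ℝ} (h : IsP P) (X : Ω → G) : IsP (law P X) := by
  classical
  refine ⟨fun g => Finset.sum_nonneg fun ω _ => ?_, ?_⟩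
  · split_ifs
    exacts [h.1 ω, le_rfl]
  · have := MP_law P X (fun _ => 1)
    simpa [h.2] using this.symm

lemma HH_id [Fintype G] (p : G → ℝ) : HH p (fun x => x) = ∑ g, Real.negMulLog (p g) := by
  classical
  unfold HH
  refine Finset.sum_congr rfl fun g _ => ?_
  have : pr p (fun x : G => x) g = p g := by simp [pr]
  rw [this]; unfold Real.negMulLog; ring

lemma HH_law [Fintype G] (P : Ω → ℝ) (X : Ω → G) :
    HH P X = HH (law P X) (fun x => x) := HH_mp (MP_law P X) (fun x => x)

lemma HH_law' [Fintype G] (P : Ω → ℝ) (X : Ω → G) :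
    HH P X = ∑ g, Real.negMulLog (law P X g) := by rw [HH_law, HH_id]

lemma dd_law [AddCommGroup G] [Fintype G] (P : Ω → ℝ) (Q : Ω' → ℝ) (X : Ω → G) (Y : Ω' → G) :
    dd P X Q Y = dd P X (law Q Y) (fun x => x) := by
  unfold dd
  rw [HH_law Q Y]
  have := HH_mp (MP_prod (MP_id P) (MP_law Q Y)) (sm X (fun x => x))
  rw [← this]; rfl

lemma dd_comm [AddCommGroup G] (P : Ω → ℝ) (Q : Ω' → ℝ) (X : Ω → G) (Y : Ω' → G) :
    dd P X Q Y = dd Q Y P X := by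
  unfold dd; rw [HH_sm_comm]; ring

lemma law_cont [AddCommGroup G] [Fintype G] {T : Type*} [TopologicalSpace T] (P : T → Ω → ℝ) (X : Ω → G)
    (hP : ∀ ω, Continuous fun t => P t ω) : Continuous fun t => HH (P t) X := by
  classical
  simp only [HH_law']
  refine continuous_finsetSum _ fun g _ => Real.continuous_negMulLog.comp ?_
  unfold law
  refine continuous_finsetSum _ fun ω _ => ?_
  by_cases h : X ω = g
  · simpa [h] using hP ω
  · simpa [h] using continuous_const

lemma exists_min [AddCommGroup G] [Fintype G] (η : ℝ) (μ : Ω₀ → ℝ) (X₀ : Ω₀ → G) :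
    ∃ p q : G → ℝ, IsP p ∧ IsP q ∧
      LB G η (dd p (fun x => x) q (fun x => x) + η * (dd μ X₀ p (fun x => x) +
        dd μ X₀ q (fun x => x))) μ X₀ := by
  classical
  have hc : IsCompact (stdSimplex ℝ G ×ˢ stdSimplex ℝ G) :=
    (isCompact_stdSimplex ℝ G).prod (isCompact_stdSimplex ℝ G)
  have hne : (stdSimplex ℝ G ×ˢ stdSimplex ℝ G).Nonempty :=
    ⟨(Pi.single 0 1, Pi.single 0 1), single_mem_stdSimplex ℝ 0, single_mem_stdSimplex ℝ 0⟩
  have hcont : Continuous fun z : (G → ℝ) × (G → ℝ) =>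
      dd z.1 (fun x => x) z.2 (fun x => x) + η * (dd μ X₀ z.1 (fun x => x) +
        dd μ X₀ z.2 (fun x => x)) := by
    unfold dd
    have f1 : ∀ g : G, Continuous fun z : (G → ℝ) × (G → ℝ) => z.1 g := fun g => by fun_prop
    have f2 : ∀ g : G, Continuous fun z : (G → ℝ) × (G → ℝ) => z.2 g := fun g => by fun_prop
    have g1 := law_cont (fun z : (G → ℝ) × (G → ℝ) => z.1) (fun x : G => x) f1
    have g2 := law_cont (fun z : (G → ℝ) × (G → ℝ) => z.2) (fun x : G => x) f2
    have g3 := law_cont (fun z : (G → ℝ) × (G → ℝ) => pm z.1 z.2)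
      (sm (fun x : G => x) (fun x : G => x)) (fun ω => (f1 _).mul (f2 _))
    have g4 := law_cont (fun z : (G → ℝ) × (G → ℝ) => pm μ z.1)
      (sm X₀ (fun x : G => x)) (fun ω => continuous_const.mul (f1 _))
    have g5 := law_cont (fun z : (G → ℝ) × (G → ℝ) => pm μ z.2)
      (sm X₀ (fun x : G => x)) (fun ω => continuous_const.mul (f2 _))
    fun_prop
  obtain ⟨z, hz, hm⟩ := hc.exists_isMinOn hne hcont.continuousOn
  refine ⟨z.1, z.2, hz.1, hz.2, ?_⟩
  intro Ω Ω' _ _ P Q X Y hP hQ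
  have := hm (a := (law P X, law Q Y)) ⟨isP_law hP X, isP_law hQ Y⟩
  refine le_trans this (le_of_eq ?_)
  simp only [← dd_law]
  rw [dd_comm, ← dd_law, dd_comm]

/-- equality case -/
lemma eq_case [AddCommGroup G] [Fintype G] [Module (ZMod 2) G] {p q : G → ℝ} (hp : IsP p) (hq : IsP q)
    (he : HH (pm p q) (sm (fun x => x) (fun x => x)) = HH p (fun x => x)) :
    ∃ V : Submodule (ZMod 2) G, Real.log (Nat.card V) ≤ HH p (fun x => x) ∧
      ∀ y y', 0 < q y → 0 < q y' → y - y' ∈ V := by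
  classical
  have hl : ∀ z, law (pm p q) (sm (fun x => x) (fun x => x)) z = ∑ y, q y • p (z - y) := by
    intro z
    unfold law pm sm
    rw [Fintype.sum_prod_type_right]
    refine Finset.sum_congr rfl fun y _ => ?_
    have : ∀ x, x + y = z ↔ x = z - y := fun x => eq_sub_iff_add_eq.symm
    simp only [this]
    simp [mul_comm]
  rw [HH_law', HH_id] at he
  have hq1 : ∑ y, q y = 1 := hq.2
  have e2 : ∑ g, Real.negMulLog (p g) = ∑ z, ∑ y, q y • Real.negMulLog (p (z - y)) := by
    rw [Finset.sum_comm]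
    have : ∀ y, ∑ z, q y • Real.negMulLog (p (z - y)) = q y * ∑ g, Real.negMulLog (p g) := by
      intro y
      rw [Finset.mul_sum]
      exact (Equiv.subRight y).sum_comp (fun g => q y * Real.negMulLog (p g))
    simp only [this, ← Finset.sum_mul, hq1, one_mul]
  rw [e2] at he
  have hle : ∀ z ∈ Finset.univ, ∑ y, q y • Real.negMulLog (p (z - y)) ≤
      Real.negMulLog (law (pm p q) (sm (fun x => x) (fun x => x)) z) := by
    intro z _
    rw [hl]
    exact Real.concaveOn_negMulLog.le_map_sum (fun i _ => hq.1 i) hq1 (fun i _ => hp.1 _)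
  have heq := (Finset.sum_eq_sum_iff_of_le hle).1 he.symm
  have key : ∀ z y y', 0 < q y → 0 < q y' → p (z - y) = p (z - y') := by
    intro z
    have h1 := heq z (Finset.mem_univ _)
    rw [hl] at h1
    have h2 := (Real.strictConcaveOn_negMulLog.map_sum_eq_iff' (fun i _ => hq.1 i) hq1
      (fun i _ => hp.1 _)).1 h1.symm
    intro y y' hy hy'
    rw [h2 y (Finset.mem_univ y) hy.ne', h2 y' (Finset.mem_univ y') hy'.ne']
  let W : AddSubgroup G :=
    { carrier := {v | ∀ z, p (z + v) = p z}
      zero_mem' := by intro z; simp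
      add_mem' := by
        intro a b ha hb z
        rw [← add_assoc, hb, ha]
      neg_mem' := by
        intro a ha z
        have := ha (z + -a)
        simpa using this.symm }
  let V : Submodule (ZMod 2) G := AddSubgroup.toZModSubmodule 2 W
  have hV : ∀ v, v ∈ V ↔ ∀ z, p (z + v) = p z := fun v => Iff.rfl
  refine ⟨V, ?_, ?_⟩
  · have hc : (0:ℝ) < Nat.card V := by exact_mod_cast Nat.card_pos
    have hb : ∀ x, p x * Nat.card V ≤ 1 := by
      intro x
      have h1 : ∑ v : V, p (x + v) = p x * Nat.card V := by
        have : ∀ v : V, p (x + v) = p x := fun v => (hV v).1 v.2 x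
        simp [this, mul_comm]
      rw [← h1, ← hp.2]
      have hinj : Function.Injective fun v : V => x + (v : G) := fun v w h => by
        simpa using h
      rw [← Finset.sum_image (f := p) (s := Finset.univ) (g := fun v : V => x + (v : G))
        (fun a _ b _ h => hinj h)]
      exact Finset.sum_le_sum_of_subset_of_nonneg (Finset.subset_univ _) (fun i _ _ => hp.1 i)
    have : Real.log (Nat.card V) = ∑ x, p x * Real.log (Nat.card V) := by
      rw [← Finset.sum_mul, hp.2, one_mul]
    rw [HH_id, this]
    refine Finset.sum_le_sum fun x _ => ?_
    rcases (hp.1 x).eq_or_lt with h0 | h0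
    · simp [← h0]
    have : Real.log (p x * Nat.card V) ≤ 0 :=
      Real.log_nonpos (mul_pos h0 hc).le (hb x)
    rw [Real.log_mul h0.ne' hc.ne'] at this
    unfold Real.negMulLog
    nlinarith
  · intro y y' hy hy'
    rw [hV]
    intro z
    have := key (z + y) y y' hy hy'
    rw [add_sub_cancel_right] at this
    rw [this]; congr 1; abel

lemma proj_bound [AddCommGroup G] [Fintype G] [Module (ZMod 2) G] {μ : Ω₀ → ℝ} (hμ : IsP μ)
    (X₀ : Ω₀ → G) {q : G → ℝ} (hq : IsP q) (V : Submodule (ZMod 2) G)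
    (hV : ∀ y y', 0 < q y → 0 < q y' → y - y' ∈ V) :
    HH q (fun x => x) + HH μ (fun ω => V.mkQ (X₀ ω)) ≤ HH (pm μ q) (sm X₀ (fun x => x)) := by
  have h1 := submod (isP_pm hμ hq) (XA := sm X₀ (fun x => x)) (XB := fun z => X₀ z.1)
    (XC := fun z => (X₀ z.1, z.2)) (XD := fun z => V.mkQ (X₀ z.1)) (by
      intro z z' hz hz' e
      have p1 : 0 < q z.2 := by
        rcases (hq.1 z.2).eq_or_lt with h | h
        · simp [pm, ← h] at hz
        · exact h
      have p2 : 0 < q z'.2 := by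
        rcases (hq.1 z'.2).eq_or_lt with h | h
        · simp [pm, ← h] at hz'
        · exact h
      have := hV _ _ p2 p1
      simp only [Submodule.mkQ_apply]
      rw [Submodule.Quotient.eq]
      simp only [sm] at e
      have e' : X₀ z.1 - X₀ z'.1 = z'.2 - z.2 := by
        rw [sub_eq_sub_iff_add_eq_add, e, add_comm]
      rw [e']; exact this) (by
      intro z z' _ _ e; simp only [e]) (by
      intro z z' _ _ e e'
      simp only [sm] at e
      simp only [e'] at e ⊢
      rw [add_left_cancel e])
  have h2 : HH (pm μ q) (fun z => (X₀ z.1, z.2)) = HH μ X₀ + HH q (fun x => x) :=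
    HH_prod hμ hq X₀ (fun x => x)
  have h3 : HH (pm μ q) (fun z => V.mkQ (X₀ z.1)) = HH μ (fun ω => V.mkQ (X₀ ω)) :=
    HH_mp (MP_fst hq) (fun ω => V.mkQ (X₀ ω))
  have h4 : HH (pm μ q) (fun z => X₀ z.1) = HH μ X₀ := HH_mp (MP_fst hq) X₀
  linarith

lemma base_lemma : GoodAt (1/2 - 1/1000) (1/4) := by
  intro G Ω₀ Ω' _ _ _ _ _ μ ν X₀ Y₀ hμ hν hr
  by_contra hcon
  push Not at hcon
  haveI := Fintype.ofFinite G
  obtain ⟨p, q, hp, hq, hLB⟩ := exists_min (1/20) μ X₀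
  have hz := dd_min_zero hμ (fun g => two_tor g) hp hq _ _ hLB
  have i1 := HH_sm_left hp hq (fun x => x) (fun x => x)
  have i2 := HH_sm_right hp hq (fun x => x) (fun x => x)
  have hz' := hz
  unfold dd at hz'
  have he : HH (pm p q) (sm (fun x => x) (fun x => x)) = HH p (fun x => x) := by linarith
  have he' : HH q (fun x => x) = HH p (fun x => x) := by linarith
  obtain ⟨V, hV1, hV2⟩ := eq_case hp hq he
  have hpb := proj_bound hμ X₀ hq V hV2
  have hrV := hr V
  have j1 := hLB _ _ _ _ X₀ X₀ hμ hμ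
  have j2 := sum_xx hμ hν X₀ Y₀
  have j3 := dd_nonneg hμ hp X₀ (fun x => x)
  have j4 := HH_sm_left hμ hq X₀ (fun x => x)
  have j5 := HH_sm_right hμ hq X₀ (fun x => x)
  have j6 := HH_sm_left hμ hν X₀ Y₀
  have j7 := HH_sm_right hμ hν X₀ Y₀
  have j8 := HH_nonneg hμ X₀
  have j9 := HH_nonneg hν Y₀
  have j10 := HH_nonneg hμ (fun ω => V.mkQ (X₀ ω))
  rw [hz] at j1
  unfold dd at j1 j3
  linarith

end base2

lemma GoodAt_mono {η η' l : ℝ} (h : η ≤ η') (hg : GoodAt η l) : GoodAt η' l := by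
  intro G Ω Ω' _ _ _ _ _ μ ν X Y hμ hν hr
  have h1 := hg G Ω Ω' μ ν X Y hμ hν hr
  have h2 := HH_nonneg hμ X
  have h3 := HH_nonneg hν Y
  refine h1.trans (mul_le_mul_of_nonneg_right h (by linarith))

lemma all_good (δ : ℝ) (hδ : 0 < δ) : ∃ l : ℝ, 0 < l ∧ GoodAt δ l := by
  set S : Set ℝ := {η | 0 ≤ η ∧ ∃ l : ℝ, 0 < l ∧ GoodAt η l} with hS
  have hne : S.Nonempty := ⟨1/2 - 1/1000, by norm_num, 1/4, by norm_num, base_lemma⟩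
  have hbd : BddBelow S := ⟨0, fun x hx => hx.1⟩
  set η := sInf S with hη
  have h0 : 0 ≤ η := le_csInf hne fun x hx => hx.1
  have hlt : η < 1/2 := by
    have : η ≤ 1/2 - 1/1000 := csInf_le hbd ⟨by norm_num, 1/4, by norm_num, base_lemma⟩
    linarith
  have up : ∀ η', η < η' → ∃ l : ℝ, 0 < l ∧ GoodAt η' l := by
    intro η' h
    obtain ⟨x, hx, hx'⟩ := exists_lt_of_csInf_lt hne h
    obtain ⟨l, hl, hg⟩ := hx.2
    exact ⟨l, hl, GoodAt_mono hx'.le hg⟩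
  rcases h0.eq_or_lt with h | h
  · exact up δ (by rw [← h]; exact hδ)
  exfalso
  set e := η^2*(1-2*η)/100 with he
  have hpos : 0 < e := by
    have : 0 < 1 - 2 * η := by linarith
    positivity
  have hle : e ≤ η := by rw [he]; nlinarith [mul_nonneg h0 h0]
  obtain ⟨l, hl, hg⟩ := up (η + e) (by linarith)
  have hs := step_lemma h hlt he hl hg
  have : η ≤ η - e := csInf_le hbd ⟨by linarith, _, by positivity, hs⟩
  linarith

section kfold
variable {Ω G : Type} [Fintype Ω] [AddCommGroup G]

/-- product weight on a power -/
def pk {k : ℕ} (P : Fin k → Ω → ℝ) : (Fin k → Ω) → ℝ := fun x => ∏ i, P i (x i)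

lemma sum_pk {k : ℕ} (P f : Fin k → Ω → ℝ) :
    ∑ x, pk P x * ∏ i, f i (x i) = ∏ i, ∑ y, P i y * f i y := by
  classical
  rw [Finset.prod_univ_sum]
  simp [pk, Finset.prod_mul_distrib]

lemma isP_pk {k : ℕ} {P : Fin k → Ω → ℝ} (h : ∀ i, IsP (P i)) : IsP (pk P) := by
  refine ⟨fun x => Finset.prod_nonneg fun i _ => (h i).1 _, ?_⟩
  have := sum_pk P (fun _ _ => 1)
  simpa [(h _).2] using this

lemma MP_eval {k : ℕ} {P : Fin k → Ω → ℝ} (h : ∀ i, IsP (P i)) (i : Fin k) :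
    MP (fun x : Fin k → Ω => x i) (pk P) (P i) := fun f => by
  classical
  have := sum_pk P (fun j y => if j = i then f y else 1)
  have e1 : ∀ x : Fin k → Ω, (∏ j, if j = i then f (x j) else 1) = f (x i) := fun x => by simp
  have e2 : ∀ j, (∑ y, P j y * (if j = i then f y else 1)) =
      if j = i then ∑ y, P i y * f y else 1 := fun j => by
    by_cases hj : j = i
    · subst hj; simp
    · simp [hj, (h j).2]
  simp only [e1, e2] at this
  rw [this]; simp

lemma MP_cons {k : ℕ} (P : Fin (k+1) → Ω → ℝ) :
    MP (fun z : Ω × (Fin k → Ω) => (Fin.cons z.1 z.2 : Fin (k+1) → Ω))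
      (pm (P 0) (pk fun i => P i.succ)) (pk P) := fun f => by
  rw [← (Fin.consEquiv (fun _ : Fin (k+1) => Ω)).sum_comp]
  refine Finset.sum_congr rfl fun z _ => ?_
  simp [Fin.consEquiv, pk, pm, Fin.prod_univ_succ]

lemma kfold {η l : ℝ} (hη : 0 ≤ η) (hg : GoodAt η l) [Finite G] [Module (ZMod 2) G] :
    ∀ (k : ℕ) (P : Fin k → Ω → ℝ) (X : Fin k → Ω → G), (∀ i, IsP (P i)) →
      (∀ i, Red l (P i) (X i)) →
      HH (pk P) (fun x => ∑ i, X i (x i)) ≤ ∑ i, HH (P i) (X i) ∧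
      (∑ i, HH (P i) (X i)) - HH (pk P) (fun x => ∑ i, X i (x i)) ≤
        k * (η * ∑ i, HH (P i) (X i)) := by
  intro k
  induction k with
  | zero =>
    intro P X hP _
    have hpk := isP_pk hP
    have : HH (pk P) (fun x => ∑ i, X i (x i)) = 0 := by
      have h1 : ∀ x, pr (pk P) (fun x => ∑ i, X i (x i)) x = 1 := by
        intro x; simp only [pr, Finset.univ_eq_empty, Finset.sum_empty, if_true]; exact hpk.2
      simp only [HH, h1, Real.log_one, neg_zero, mul_zero, Finset.sum_const_zero]
    rw [this]; simp
  | succ k ih =>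
    intro P X hP hr
    obtain ⟨i1, i2⟩ := ih (fun i => P i.succ) (fun i => X i.succ) (fun i => hP _) (fun i => hr _)
    have hq := isP_pk (P := fun i : Fin k => P i.succ) (fun i => hP _)
    have e : HH (pk P) (fun x => ∑ i, X i (x i)) =
        HH (pm (P 0) (pk fun i => P i.succ)) (sm (X 0) (fun x => ∑ i : Fin k, X i.succ (x i))) := by
      rw [← HH_mp (MP_cons P)]
      congr 1; funext z; simp [sm, Fin.sum_univ_succ]
    rw [e, Fin.sum_univ_succ]
    have h1 := hg G Ω _ _ _ (X 0) (fun x => ∑ i : Fin k, X i.succ (x i)) (hP 0) hq (hr 0)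
    have h2 := HH_sm_le (hP 0) hq (X 0) (fun x => ∑ i : Fin k, X i.succ (x i))
    have h3 := HH_nonneg (hP 0) (X 0)
    have h4 := HH_nonneg hq (fun x => ∑ i : Fin k, X i.succ (x i))
    generalize HH (pm (P 0) (pk fun i => P i.succ)) (sm (X 0) (fun x => ∑ i : Fin k, X i.succ (x i))) = A at *
    generalize HH (pk fun i => P i.succ) (fun x => ∑ i : Fin k, X i.succ (x i)) = B at *
    generalize HH (P 0) (X 0) = C at *
    generalize ∑ i : Fin k, HH (P i.succ) (X i.succ) = D at *
    refine ⟨by linarith, ?_⟩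
    push_cast
    have h5 : η * B ≤ η * D := mul_le_mul_of_nonneg_left i1 hη
    have h6 : 0 ≤ (k:ℝ) * (η * C) := by positivity
    nlinarith
end kfold

lemma ent_eq {A : Type} [Fintype A] (p : A → ℝ) : ent p = HH p (fun x => x) := by
  rw [HH_id, ent, finsum_eq_sum_of_fintype]

lemma push_eq {A B : Type} [Fintype A] (f : A → B) (p : A → ℝ) : push f p = law p f := by
  classical
  funext b
  unfold push law
  rw [finsum_mem_def, finsum_eq_sum_of_fintype]
  refine Finset.sum_congr rfl fun a _ => ?_
  simp [Set.indicator_apply]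

lemma isDist_eq {A : Type} [Fintype A] {p : A → ℝ} (h : IsDist p) : IsP p := by
  refine ⟨h.1, ?_⟩
  rw [← finsum_eq_sum_of_fintype]; exact h.2

lemma ent_unif {A : Type} [Fintype A] (s : Set A) (hs : s.Nonempty) :
    ent (unifOn s) = Real.log (Nat.card s) := by
  classical
  have hc : (0:ℝ) < Nat.card s := by
    have := hs.to_subtype
    exact_mod_cast Nat.card_pos
  have e : ∀ a, Real.negMulLog (unifOn s a) =
      if a ∈ s then (Nat.card s : ℝ)⁻¹ * Real.log (Nat.card s) else 0 := by
    intro a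
    by_cases h : a ∈ s
    · simp [unifOn, h, Real.negMulLog]
    · simp [unifOn, h]
  rw [ent, finsum_eq_sum_of_fintype]
  simp only [e]
  rw [← Finset.sum_filter, Finset.sum_const, nsmul_eq_mul]
  have : ((Finset.univ.filter (· ∈ s)).card : ℝ) = Nat.card s := by
    rw [Nat.card_eq_fintype_card, Fintype.card_subtype]
  rw [this]; field_simp

theorem statement4 :
    ∀ k : ℕ, 2 ≤ k → ∀ ε : ℝ, 0 < ε → ∃ L : ℝ, 0 < L ∧
      ∀ (n : ℕ) (p : Fin k → Fvec n → ℝ), (∀ i, IsDist (p i)) →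
        ∃ V : Submodule (ZMod 2) (Fvec n),
          ent (unifOn (V : Set (Fvec n))) ≤ L * ∑ i, ent (p i) ∧
          ent (indepSum k fun i => push V.mkQ (p i)) ≥
            (∑ i, ent (push V.mkQ (p i))) - ε * ∑ i, ent (p i) := by
  intro k hk ε hε
  have hk0 : (0:ℝ) < k := by exact_mod_cast (by omega : 0 < k)
  obtain ⟨l, hl, hg⟩ := all_good (ε / k) (by positivity)
  refine ⟨l⁻¹, by positivity, ?_⟩
  intro n p hp
  have hP : ∀ i, IsP (p i) := fun i => isDist_eq (hp i)
  obtain ⟨V, hV1, hV2⟩ := exists_red (isP_pk hP) (fun (i : Fin k) (x : Fin k → Fvec n) => x i) l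
  have m1 : ∀ i, HH (pk p) (fun x : Fin k → Fvec n => x i) = HH (p i) (fun x => x) := fun i =>
    HH_mp (MP_eval hP i) (fun x => x)
  have m2 : ∀ i, HH (pk p) (fun x : Fin k → Fvec n => V.mkQ (x i)) = HH (p i) (fun x => V.mkQ x) :=
    fun i => HH_mp (MP_eval hP i) (fun x => V.mkQ x)
  have m3 : ∀ i, Red l (p i) (fun x => V.mkQ x) := fun i =>
    (Red_mp (MP_eval hP i) (X := fun x => V.mkQ x)).1 (hV2 i)
  simp only [m1, m2] at hV1
  haveI : Finite (Fvec n ⧸ V) := Finite.of_surjective _ (Submodule.mkQ_surjective V)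
  haveI : Fintype (Fvec n ⧸ V) := Fintype.ofFinite _
  have hnn : ∀ i, 0 ≤ HH (p i) (fun x => V.mkQ x) := fun i => HH_nonneg (hP i) _
  refine ⟨V, ?_, ?_⟩
  · rw [ent_unif _ ⟨0, V.zero_mem⟩]
    simp only [ent_eq]
    rw [le_inv_mul_iff₀ hl]
    have := Finset.sum_nonneg fun i (_ : i ∈ Finset.univ) => hnn i
    refine hV1.trans ?_
    linarith
  · have hlaw : ∀ i, HH (law (p i) V.mkQ) (fun x => x) = HH (p i) (fun x => V.mkQ x) := fun i =>
      (HH_law (p i) V.mkQ).symm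
    have kf := (kfold (by positivity) hg k (fun i => law (p i) V.mkQ) (fun _ x => x)
      (fun i => isP_law (hP i) _) (fun i => (Red_mp (MP_law (p i) V.mkQ) (X := fun x => x)).1 (m3 i))).2
    have e1 : ent (indepSum k fun i => push V.mkQ (p i)) =
        HH (pk fun i => law (p i) V.mkQ) (fun x => ∑ i, x i) := by
      unfold indepSum
      rw [ent_eq]
      simp only [push_eq]
      rw [← HH_law]; rfl
    rw [e1]
    simp only [push_eq, ent_eq]
    simp only [hlaw] at kf ⊢
    have hle : ∑ i, HH (p i) (fun x => V.mkQ x) ≤ ∑ i, HH (p i) (fun x => x) :=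
      Finset.sum_le_sum fun i _ => HH_le (hP i) fun _ _ _ _ e => by rw [e]
    have h7 : (k:ℝ) * (ε / k * ∑ i, HH (p i) (fun x => V.mkQ x)) =
      ε * ∑ i, HH (p i) (fun x => V.mkQ x) := by field_simp
    rw [h7] at kf
    have := mul_le_mul_of_nonneg_left hle hε.le
    linarith
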